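/- arXiv:math/0302037 — 2 statements merged into one kernel-verified Lean document; each statement's English description precedes it below -/
import Mathlib

section
/- The map π ↦ (A_n(π), B_n(π)) is a bijection from W_n onto the set of all pairs of n-standard bitableaux having the same shape. -/
open scoped Classical

noncomputable section

/-! ## The hyperoctahedral group `W_n` as signed permutations of `I_n ⊆ ℤ` -/

abbrev P := Equiv.Perm ℤ

/-- `W_n` : permutations of `I_n = {±1, …, ±n}` commuting with `i ↦ -i`,
realized as permutations of `ℤ` fixing everything outside `I_n`. -/
def Wset (n : ℕ) : Set P :=
  {π | (∀ i : ℤ, π (-i) = - π i) ∧ ∀ i : ℤ, (n : ℤ) < |i| → π i = i}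

/-- the generator `t = (1, -1)` -/
def tgen : P := Equiv.swap 1 (-1)

/-- the generator `s_i = (i, i+1)(-i, -(i+1))` -/
def sgen (i : ℕ) : P :=
  Equiv.swap (i : ℤ) ((i : ℤ) + 1) * Equiv.swap (-(i : ℤ)) (-((i : ℤ) + 1))

/-- the generating set `S_n = {t, s_1, …, s_{n-1}}` -/
def Sset (n : ℕ) : Set P := insert tgen (sgen '' Set.Icc 1 (n - 1))

/-- the length function of `W_n` with respect to `S_n` -/
def len (n : ℕ) (w : P) : ℕ :=
  sInf {k | ∃ l : List P, (∀ g ∈ l, g ∈ Sset n) ∧ l.prod = w ∧ l.length = k}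

/-- number of occurrences of `tgen` in a list -/
def tcount (l : List P) : ℕ := (l.map (fun g => if g = tgen then 1 else 0)).sum

/-- `ℓ_t(w)` : the number of occurrences of `t` in a (any) reduced expression of `w` -/
def tlen (n : ℕ) (w : P) : ℕ :=
  sInf {k | ∃ l : List P, (∀ g ∈ l, g ∈ Sset n) ∧ l.prod = w ∧
    l.length = len n w ∧ tcount l = k}

/-- the Bruhat order on `W_n` : `x ≤ y` iff some reduced expression of `y`
has a subword whose product is `x`. -/
def bruhat (n : ℕ) (x y : P) : Prop :=
  ∃ l l' : List P, (∀ g ∈ l, g ∈ Sset n) ∧ l.prod = y ∧ l.length = len n y ∧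
    List.Sublist l' l ∧ l'.prod = x

/-! ## Generalized Robinson–Schensted correspondence -/

abbrev Tab := List (List ℕ)

/-- row insertion of `x` into one row; returns the new row and the bumped entry (if any) -/
def insRow (x : ℕ) : List ℕ → List ℕ × Option ℕ
  | [] => ([x], none)
  | y :: ys =>
    if x < y then (x :: ys, some y)
    else
      let p := insRow x ys
      (y :: p.1, p.2)

/-- Schensted insertion of `x` into a tableau; returns the new tableau
and the (row, column) coordinates of the newly created box. -/
def insTab (x : ℕ) : Tab → Tab × ℕ × ℕ
  | [] => ([[x]], 0, 0)
  | row :: rest =>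
    let p := insRow x row
    match p.2 with
    | none => (p.1 :: rest, 0, row.length)
    | some b =>
      let q := insTab b rest
      (p.1 :: q.1, q.2.1 + 1, q.2.2)

/-- place the label `lbl` at the end of row `pos.1` of the recording tableau -/
def place (lbl : ℕ) (pos : ℕ × ℕ) (T : Tab) : Tab :=
  if pos.1 < T.length then T.set pos.1 ((T.getD pos.1 []) ++ [lbl]) else T ++ [[lbl]]

/-- one step of the generalized RS algorithm: insert `|π(i)|` into `A⁺` or `A⁻`
according to the sign of `π(i)`, and record `i` in the corresponding `B`-tableau. -/
def RSstep (π : P) (st : (Tab × Tab) × (Tab × Tab)) (i : ℕ) : (Tab × Tab) × (Tab × Tab) :=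
  let v := (π (i : ℤ)).natAbs
  if 0 < π (i : ℤ) then
    let p := insTab v st.1.1
    ((p.1, st.1.2), (place i p.2 st.2.1, st.2.2))
  else
    let p := insTab v st.1.2
    ((st.1.1, p.1), (st.2.1, place i p.2 st.2.2))

def RSfull (n : ℕ) (π : P) : (Tab × Tab) × (Tab × Tab) :=
  (((List.range n).map (· + 1)).foldl (RSstep π)) ((([], []), ([], [])))

/-- the insertion bitableau `A_n(π) = (A⁺, A⁻)` -/
def Atab (n : ℕ) (π : P) : Tab × Tab := (RSfull n π).1

/-- the recording bitableau `B_n(π) = (B⁺, B⁻)` -/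
def Btab (n : ℕ) (π : P) : Tab × Tab := (RSfull n π).2

/-- `T` is a standard Young tableau -/
def IsStdTab (T : Tab) : Prop :=
  (∀ row ∈ T, row ≠ [] ∧ row.Chain' (· < ·)) ∧
  T.Chain' (fun r1 r2 => r2.length ≤ r1.length) ∧
  ∀ i j : ℕ, i + 1 < T.length → j < (T.getD (i + 1) []).length →
    (T.getD i []).getD j 0 < (T.getD (i + 1) []).getD j 0

/-- `(T₁, T₂)` is an `n`-standard bitableau: both standard, entry sets disjoint
with union `{1, …, n}` -/
def IsNStdBitab (n : ℕ) (p : Tab × Tab) : Prop :=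
  IsStdTab p.1 ∧ IsStdTab p.2 ∧ (p.1.flatten ++ p.2.flatten).Perm (List.range' 1 n)

/-- the shape of a bitableau -/
def shape2 (p : Tab × Tab) : List ℕ × List ℕ := (p.1.map List.length, p.2.map List.length)

/-! ## Knuth relations -/

/-- `t_i = (i, -i)` -/
def ttgen (i : ℕ) : P := Equiv.swap (i : ℤ) (-(i : ℤ))

/-- `S'_n = S_n ∪ {t_1, …, t_n}` -/
def Sprime (n : ℕ) : Set P := Sset n ∪ (ttgen '' Set.Icc 1 n)

/-- the extended left descent set `L'(w)` -/
def Ldesc (n : ℕ) (w : P) : Set P := {u ∈ Sprime n | len n (u * w) < len n w}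

/-- the elementary relation `x —s→ y` -/
def knuthStep (n : ℕ) (x y : P) : Prop :=
  ∃ i ∈ Set.Icc 1 (n - 1), y = sgen i * x ∧ len n x < len n y ∧
    ¬ (Ldesc n x ⊆ Ldesc n y)

/-- the relation `x ↔_L y` -/
def knuthRel (n : ℕ) : P → P → Prop :=
  Relation.ReflTransGen (fun a b => knuthStep n a b ∨ knuthStep n b a)

/-! ## Parabolic subgroups, coset representatives and the decomposition -/

/-- the parabolic subgroup `𝔖_n = ⟨s_1, …, s_{n-1}⟩` -/
def SymN (n : ℕ) : Subgroup P := Subgroup.closure (sgen '' Set.Icc 1 (n - 1))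

/-- the parabolic subgroup `𝔖_{l, n-l} = ⟨{s_1, …, s_{n-1}} \ {s_l}⟩` -/
def SymLR (n l : ℕ) : Subgroup P :=
  Subgroup.closure (sgen '' {i | 1 ≤ i ∧ i ≤ n - 1 ∧ i ≠ l})

/-- `Y_{l, n-l}` : minimal length representatives of left cosets of `𝔖_{l,n-l}` in `𝔖_n` -/
def Yset (n l : ℕ) : Set P :=
  {w | w ∈ SymN n ∧ ∀ u ∈ SymLR n l, len n w ≤ len n (w * u)}

/-- `X_n` : minimal length representatives of the left cosets `w 𝔖_n` in `W_n` -/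
def Xset (n : ℕ) : Set P :=
  {w | w ∈ Wset n ∧ ∀ u ∈ SymN n, len n w ≤ len n (w * u)}

/-- `X_n^{(l)}` -/
def Xl (n l : ℕ) : Set P := {w ∈ Xset n | tlen n w = l}

/-- `r_1 = t`, `r_{i+1} = s_i r_i` -/
def rgen : ℕ → P
  | 0 => 1
  | 1 => tgen
  | (i + 2) => sgen (i + 1) * rgen (i + 1)

/-- `a_l = r_1 r_2 ⋯ r_l` -/
def al (l : ℕ) : P := ((List.range l).map (fun k => rgen (k + 1))).prod

/-- the set `X_n^{(l)} ⬝ 𝔖_{l, n-l}` -/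
def XSset (n l : ℕ) : Set P := Set.image2 (· * ·) (Xl n l) (SymLR n l : Set P)

/-- `w = a ⬝ a_l ⬝ σ ⬝ b⁻¹` is the canonical decomposition of `w`
(with `a, b ∈ Y_{l,n-l}`, `σ ∈ 𝔖_{l,n-l}` and additivity of lengths) -/
def IsDecomp (n l : ℕ) (w a σ b : P) : Prop :=
  a ∈ Yset n l ∧ b ∈ Yset n l ∧ σ ∈ SymLR n l ∧ w = a * al l * σ * b⁻¹ ∧
    len n w = len n a + len n (al l) + len n σ + len n b

/-- the relation `w ⇝_L w'` -/
def squig (n : ℕ) (w w' : P) : Prop :=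
  ∃ l a σ b a' σ', tlen n w = l ∧ tlen n w' = l ∧
    IsDecomp n l w a σ b ∧ IsDecomp n l w' a' σ' b ∧ knuthRel n σ σ'

/-! ## The two-parameter Iwahori–Hecke algebra and Kazhdan–Lusztig data -/

/-- the ring `A = ℤ[V^{±1}, v^{±1}]`, as the group algebra of `Γ = ℤ × ℤ`
(a monomial `V^i v^j` corresponds to `(i,j) ∈ ℤ × ℤ`). -/
abbrev RR := AddMonoidAlgebra ℤ (ℤ × ℤ)

/-- the monomial with exponent `g` -/
def mono (g : ℤ × ℤ) : RR := AddMonoidAlgebra.single g 1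

/-- `Γ₋` for the lexicographic order with `V ≫ v`: `V^i v^j < 1` -/
def Gneg (g : ℤ × ℤ) : Prop := g.1 < 0 ∨ (g.1 = 0 ∧ g.2 < 0)

/-- an element of `ℤ[Γ₋]` : all monomials lie in `Γ₋` -/
def inNeg (f : RR) : Prop := ∀ g ∈ f.coeff.support, Gneg g

/-- the bar involution of `A`, `V ↦ V⁻¹`, `v ↦ v⁻¹` -/
def barR : RR → RR := fun f => .ofCoeff (Finsupp.equivMapDomain (Equiv.neg (ℤ × ℤ)) f.coeff)

/-- the parameter `v_s` of a generator (`v_t = V`, `v_{s_i} = v`) -/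
def vgen (g : P) : RR := if g = tgen then mono (1, 0) else mono (0, 1)

/-- the inverse `v_s⁻¹` of the parameter of a generator -/
def vgenInv (g : P) : RR := if g = tgen then mono (-1, 0) else mono (0, -1)

/-- the free `A`-module with basis indexed by permutations; the Hecke algebra
`H_n` is carried by the elements supported on `W_n`. -/
abbrev HH := P →₀ RR

/-- the standard basis element `T_w` -/
def TT (w : P) : HH := Finsupp.single w 1

/-- All the data attached to the Iwahori–Hecke algebra `H_n` of `W_n` over
`A = ℤ[V^{±1}, v^{±1}]`: the multiplication, the bar involution, the
Kazhdan–Lusztig basis `C_w = Σ_y P*_{y,w} T_y` (for the order on `Γ` given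
by `Γ₊ = {V^i v^j : i > 0} ∪ {v^j : j > 0}`), and Lusztig's `M`-polynomials,
together with their defining properties. -/
structure KLData (n : ℕ) where
  mul : HH → HH → HH
  mul_add_left : ∀ a b c, mul (a + b) c = mul a c + mul b c
  mul_add_right : ∀ a b c, mul a (b + c) = mul a b + mul a c
  mul_smul_left : ∀ (r : RR) a b, mul (r • a) b = r • mul a b
  mul_smul_right : ∀ (r : RR) a b, mul a (r • b) = r • mul a b
  mul_assoc : ∀ a b c, mul (mul a b) c = mul a (mul b c)
  one_mul : ∀ a, mul (TT 1) a = a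
  mul_one : ∀ a, mul a (TT 1) = a
  /-- `T_w T_{w'} = T_{w w'}` when lengths add -/
  T_mul : ∀ w w', w ∈ Wset n → w' ∈ Wset n →
    len n (w * w') = len n w + len n w' → mul (TT w) (TT w') = TT (w * w')
  /-- the quadratic relations `T_s² = T_1 + (v_s - v_s⁻¹) T_s` -/
  T_sq : ∀ g ∈ Sset n, mul (TT g) (TT g) = TT 1 + (vgen g - vgenInv g) • TT g
  bar : HH → HH
  bar_add : ∀ a b, bar (a + b) = bar a + bar b
  bar_smul : ∀ (r : RR) a, bar (r • a) = barR r • bar a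
  bar_mul : ∀ a b, bar (mul a b) = mul (bar a) (bar b)
  /-- `bar T_s = T_s⁻¹ = T_s + (v_s⁻¹ - v_s) T_1` -/
  bar_gen : ∀ g ∈ Sset n, bar (TT g) = TT g + (vgenInv g - vgen g) • TT 1
  /-- the Kazhdan–Lusztig basis element `C_w`, whose coordinate at `T_y` is
  the polynomial `P*_{y,w}` -/
  C : P → HH
  /-- `P*_{w,w} = 1` -/
  C_self : ∀ w, C w w = 1
  /-- `P*_{y,w} = 0` unless `y ≤ w` -/
  C_supp : ∀ w y, C w y ≠ 0 → bruhat n y w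
  /-- `P*_{y,w} ∈ ℤ[Γ₋]` for `y < w` -/
  C_neg : ∀ w y, y ≠ w → inNeg (C w y)
  /-- `C_w` is bar-invariant -/
  C_bar : ∀ w, w ∈ Wset n → bar (C w) = C w
  /-- `M s w` is the finitely supported family `z ↦ M^s_{z,w}` -/
  M : P → P → (P →₀ RR)
  M_supp : ∀ s w z, (M s w) z ≠ 0 → bruhat n z w ∧ z ≠ w ∧ len n (s * z) < len n z
  /-- the symmetry condition `bar M^s_{y,w} = M^s_{y,w}` -/
  M_bar : ∀ s w z, barR ((M s w) z) = (M s w) z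
  /-- the condition `M^s_{y,w} + Σ_{y<z<w, sz<z} P*_{y,z} M^s_{z,w} - v_s P*_{y,w} ∈ ℤ[Γ₋]` -/
  M_cond : ∀ s ∈ Sset n, ∀ y w, len n (s * y) < len n y → len n w < len n (s * w) →
    bruhat n y w → y ≠ w →
    inNeg ((M s w) y + (M s w).sum (fun z m => if z = y then 0 else C z y * m)
      - vgen s * C w y)
  /-- `C_s C_w = C_{sw} + Σ_{z<w, sz<z} M^s_{z,w} C_z` when `sw > w` -/
  mulC_up : ∀ s ∈ Sset n, ∀ w ∈ Wset n, len n w < len n (s * w) →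
    mul (C s) (C w) = C (s * w) + (M s w).sum (fun z m => m • C z)
  /-- `C_s C_w = (v_s + v_s⁻¹) C_w` when `sw < w` -/
  mulC_down : ∀ s ∈ Sset n, ∀ w ∈ Wset n, len n (s * w) < len n w →
    mul (C s) (C w) = (vgen s + vgenInv s) • C w

/-- `P_{y,w} = v_y⁻¹ v_w P*_{y,w}` -/
def Ppoly (n : ℕ) (D : KLData n) (y w : P) : RR :=
  mono ((tlen n w : ℤ) - (tlen n y : ℤ),
        ((len n w : ℤ) - (tlen n w : ℤ)) - ((len n y : ℤ) - (tlen n y : ℤ))) * D.C w y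

/-- the `R`-polynomials : `bar T_w = Σ_y R_{y,w} T_y` -/
def Rpoly {n : ℕ} (D : KLData n) (y w : P) : RR := (D.bar (TT w)) y

/-- `y ≤_{L,s} w` : `C_y` occurs with non-zero coefficient in `C_s C_w`
(expressed in the `C`-basis), for some `s ∈ S_n`, `y ≠ w` -/
def leLelem {n : ℕ} (D : KLData n) (y w : P) : Prop :=
  ∃ s ∈ Sset n, len n w < len n (s * w) ∧ (y = s * w ∨ (D.M s w) y ≠ 0)

/-- the preorder `≤_L` -/
def leL {n : ℕ} (D : KLData n) : P → P → Prop := Relation.ReflTransGen (leLelem D)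

/-- the equivalence `∼_L`; its classes are the left cells -/
def simL {n : ℕ} (D : KLData n) (y w : P) : Prop := leL D y w ∧ leL D w y

/-- `f` is a polynomial in `q = v²` -/
def isPolyInQ (f : RR) : Prop := ∀ g ∈ f.coeff.support, g.1 = 0 ∧ 0 ≤ g.2 ∧ 2 ∣ g.2

end

/-!
Row insertion can be undone once the row of the new box is known: remove the last entry of that
row and bump upwards. The largest label of a recording tableau sits at the end of its row and so
reveals this row; undoing the insertions from the largest label downwards recovers the inserted
word, and the process can be started from any two standard tableaux of the same shape. For coloured
letters the colours do not interact, and the last letter has the colour whose recording tableau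
holds the largest label. Signed permutations are the words in the colours `±` whose underlying
letters are a rearrangement of `1, …, n`.
-/

/-! ## Standard tableaux -/

/-- Two consecutive rows, `r` above `s`, of a tableau: `s` is no longer than `r`, and the entries
increase strictly down each column. -/
inductive ColumnStrict {α : Type*} [LT α] : List α → List α → Prop
  | nil (r : List α) : ColumnStrict r []
  | cons {a b : α} {r s : List α} :
      a < b → ColumnStrict r s → ColumnStrict (a :: r) (b :: s)

namespace ColumnStrict

section LT

variable {α : Type*} [LT α] {a b x : α} {r s u v : List α}

@[simp]
lemma nil_right : ColumnStrict r [] := .nil r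

@[simp]
lemma nil_left_iff : ColumnStrict [] s ↔ s = [] :=
  ⟨fun h => by cases h; rfl, by rintro rfl; exact .nil _⟩

@[simp]
lemma cons_cons_iff : ColumnStrict (a :: r) (b :: s) ↔ a < b ∧ ColumnStrict r s :=
  ⟨fun | .cons hab h => ⟨hab, h⟩, fun h => .cons h.1 h.2⟩

lemma iff_getD (d : α) : ColumnStrict r s ↔
    s.length ≤ r.length ∧ ∀ j < s.length, r.getD j d < s.getD j d := by
  induction s generalizing r with
  | nil => simp
  | cons b s ih =>
    cases r with
    | nil => simp
    | cons a r =>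
      conv_rhs => rw [← Nat.and_forall_add_one]
      simp [ih, and_left_comm]

lemma length_le (h : ColumnStrict r s) : s.length ≤ r.length := by
  induction h with
  | nil => simp
  | cons _ _ ih => simpa using ih

lemma append_left (h : ColumnStrict r s) (t : List α) : ColumnStrict (r ++ t) s := by
  induction h with
  | nil => simp
  | cons hab _ ih => exact .cons hab ih

lemma of_append_left (h : ColumnStrict (u ++ v) s) (hs : s.length ≤ u.length) :
    ColumnStrict u s := by
  induction u generalizing s with
  | nil => simp_all
  | cons a u ih =>
    cases h with
    | nil => simp
    | cons hab h => exact .cons hab (ih h (by simpa using hs))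

lemma of_append_right (h : ColumnStrict r (s ++ v)) : ColumnStrict r s := by
  induction s generalizing r with
  | nil => simp
  | cons b s ih =>
    cases h with
    | cons hab h => exact .cons hab (ih h)

lemma concat_right (h : ColumnStrict r s) (hlen : s.length < r.length) (hx : ∀ a ∈ r, a < x) :
    ColumnStrict r (s ++ [x]) := by
  induction h with
  | nil r => cases r <;> simp_all
  | cons hab _ ih =>
    exact .cons hab (ih (by simpa using hlen) fun a ha => hx a (List.mem_cons_of_mem _ ha))

end LT

section Preorder

variable {α : Type*} [Preorder α] {b x : α} {r s u v : List α}

lemma lower_entry (h : ColumnStrict (u ++ b :: v) s) (hx : x ≤ b) :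
    ColumnStrict (u ++ x :: v) s := by
  induction u generalizing s with
  | nil =>
    cases h with
    | nil => simp
    | cons hbc h => exact .cons (hx.trans_lt hbc) h
  | cons a u ih =>
    cases h with
    | nil => simp
    | cons hac h => exact .cons hac (ih h)

lemma raise_entry (h : ColumnStrict (u ++ x :: v) s) (hb : ∀ c ∈ s, b < c) :
    ColumnStrict (u ++ b :: v) s := by
  induction u generalizing s with
  | nil =>
    cases h with
    | nil => simp
    | cons _ h => exact .cons (hb _ (by simp)) h
  | cons a u ih =>
    cases h with
    | nil => simp
    | cons hac h => exact .cons hac (ih h fun c hc => hb c (List.mem_cons_of_mem _ hc))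

lemma of_concat_left (h : ColumnStrict (r ++ [x]) s) (hs : ∀ c ∈ s, c ≤ x) :
    ColumnStrict r s := by
  induction r generalizing s with
  | nil =>
    cases h with
    | nil => simp
    | cons hxc _ => exact absurd (hs _ (by simp)) hxc.not_ge
  | cons a r ih =>
    cases h with
    | nil => simp
    | cons hac h => exact .cons hac (ih h fun c hc => hs c (List.mem_cons_of_mem _ hc))

end Preorder

end ColumnStrict

lemma isStdTab_iff {T : Tab} : IsStdTab T ↔
    (∀ row ∈ T, row ≠ [] ∧ row.Pairwise (· < ·)) ∧ T.IsChain ColumnStrict := by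
  simp only [← List.isChain_iff_pairwise, List.isChain_iff_getElem (l := T),
    ColumnStrict.iff_getD 0]
  refine and_congr_right fun _ => ⟨fun ⟨hlen, hcol⟩ i hi => ⟨?_, ?_⟩, fun h => ⟨?_, ?_⟩⟩
  · exact List.isChain_iff_getElem.1 hlen i hi
  · simpa [hi, Nat.lt_of_succ_lt hi] using fun j => hcol i j hi
  · exact List.isChain_iff_getElem.2 fun i hi => (h i hi).1
  · intro i j hi hj
    simpa [hi, Nat.lt_of_succ_lt hi] using (h i hi).2 j (by simpa [hi] using hj)

@[simp]
lemma isStdTab_nil : IsStdTab [] := by simp [isStdTab_iff]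

lemma isStdTab_cons {row : List ℕ} {rest : Tab} : IsStdTab (row :: rest) ↔
    row ≠ [] ∧ row.Pairwise (· < ·) ∧ ColumnStrict row (rest.headD []) ∧ IsStdTab rest := by
  cases rest with
  | nil => simp [isStdTab_iff]
  | cons row' rest =>
    simp only [isStdTab_iff, List.forall_mem_cons, List.isChain_cons_cons, List.headD_cons]
    tauto

/-! ## Row insertion -/

lemma forall_le_or_exists_eq_append_cons {α : Type*} [LinearOrder α] (x : α) (row : List α) :
    (∀ y ∈ row, y ≤ x) ∨ ∃ u b v, row = u ++ b :: v ∧ (∀ y ∈ u, y ≤ x) ∧ x < b := by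
  induction row with
  | nil => simp
  | cons y row ih =>
    rcases lt_or_ge x y with hxy | hyx
    · exact .inr ⟨[], y, row, by simp [hxy]⟩
    · rcases ih with hle | ⟨u, b, v, rfl, hu, hxb⟩
      · exact .inl (by simpa [hyx] using hle)
      · exact .inr ⟨y :: u, b, v, by simpa [hyx, hxb] using hu⟩

lemma insRow_of_forall_le {x : ℕ} {row : List ℕ} (h : ∀ y ∈ row, y ≤ x) :
    insRow x row = (row ++ [x], none) := by
  induction row with
  | nil => rfl
  | cons y row ih =>
    rw [List.forall_mem_cons] at h
    simp [insRow, h.1.not_gt, ih h.2]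

lemma insRow_append_cons {x b : ℕ} {u : List ℕ} (hu : ∀ y ∈ u, y ≤ x) (hxb : x < b)
    (v : List ℕ) : insRow x (u ++ b :: v) = (u ++ x :: v, some b) := by
  induction u with
  | nil => simp [insRow, hxb]
  | cons y u ih =>
    rw [List.forall_mem_cons] at hu
    simp [insRow, hu.1.not_gt, ih hu.2]

lemma exists_insRow_eq_cons (x : ℕ) (row : List ℕ) : ∃ a t, a ≤ x ∧ (insRow x row).1 = a :: t := by
  cases row with
  | nil => exact ⟨x, [], le_rfl, rfl⟩
  | cons y row =>
    rw [insRow]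
    split_ifs with hxy
    · exact ⟨x, row, le_rfl, rfl⟩
    · exact ⟨y, _, not_lt.1 hxy, rfl⟩

lemma columnStrict_insRow {x b : ℕ} {u v s : List ℕ} (h : ColumnStrict (u ++ b :: v) s)
    (hu : ∀ y ∈ u, y < b) (hxb : x < b) : ColumnStrict (u ++ x :: v) (insRow b s).1 := by
  induction u generalizing s with
  | nil =>
    cases h with
    | nil => exact .cons hxb (.nil _)
    | cons hbc h => simpa [insRow, hbc] using ⟨hxb, h⟩
  | cons y u ih =>
    rw [List.forall_mem_cons] at hu
    cases h with
    | nil => exact .cons hu.1 (.nil _)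
    | @cons _ c _ s hyc h =>
      by_cases hbc : b < c
      · simpa [insRow, hbc] using ⟨hu.1, h.lower_entry hxb.le⟩
      · simpa [insRow, hbc] using ⟨hyc, ih h hu.2⟩

lemma columnStrict_of_insRow {x b : ℕ} {u v s : List ℕ}
    (h : ColumnStrict (u ++ x :: v) (insRow b s).1) (hv : ∀ z ∈ v, b < z)
    (hs : s.Pairwise (· < ·)) : ColumnStrict (u ++ b :: v) s := by
  induction u generalizing s with
  | nil =>
    rcases s with - | ⟨c, s⟩
    · simp
    by_cases hbc : b < c
    · simp_all [insRow]
    · obtain ⟨a, t, hab, hat⟩ := exists_insRow_eq_cons b s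
      have hvs : ColumnStrict v (a :: t) := by simp_all [insRow]
      cases hvs with
      | cons hza _ => exact absurd (hv _ (by simp)) (hza.trans_le hab).not_gt
  | cons y u ih =>
    rcases s with - | ⟨c, s⟩
    · simp
    rw [List.pairwise_cons] at hs
    by_cases hbc : b < c
    · simp only [insRow, hbc, if_true, List.cons_append, ColumnStrict.cons_cons_iff] at h ⊢
      exact ⟨h.1.trans hbc, h.2.raise_entry fun d hd => hbc.trans (hs.1 d hd)⟩
    · simp only [insRow, hbc, if_false, List.cons_append, ColumnStrict.cons_cons_iff] at h ⊢
      exact ⟨h.1, ih h.2 hs.2⟩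

lemma insTab_cons_of_forall_le {x : ℕ} {row : List ℕ} (h : ∀ y ∈ row, y ≤ x) (rest : Tab) :
    insTab x (row :: rest) = ((row ++ [x]) :: rest, 0, row.length) := by
  simp [insTab, insRow_of_forall_le h]

lemma insTab_append_cons_cons {x b : ℕ} {u : List ℕ} (hu : ∀ y ∈ u, y ≤ x) (hxb : x < b)
    (v : List ℕ) (rest : Tab) : insTab x ((u ++ b :: v) :: rest) =
      ((u ++ x :: v) :: (insTab b rest).1, (insTab b rest).2.1 + 1, (insTab b rest).2.2) := by
  simp [insTab, insRow_append_cons hu hxb]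

@[elab_as_elim]
lemma insTab_induction {motive : ℕ → Tab → Prop} (nil : ∀ x, motive x [])
    (append : ∀ x row rest, (∀ y ∈ row, y ≤ x) → motive x (row :: rest))
    (bump : ∀ x u b v rest, (∀ y ∈ u, y ≤ x) → x < b → motive b rest →
      motive x ((u ++ b :: v) :: rest)) (x : ℕ) (T : Tab) : motive x T := by
  induction T generalizing x with
  | nil => exact nil x
  | cons row rest ih =>
    rcases forall_le_or_exists_eq_append_cons x row with hle | ⟨u, b, v, rfl, hu, hxb⟩
    · exact append x row rest hle
    · exact bump x u b v rest hu hxb (ih b)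

lemma headD_insTab (x : ℕ) (T : Tab) :
    (insTab x T).1.headD [] = (insRow x (T.headD [])).1 := by
  induction x, T using insTab_induction with
  | nil x => rfl
  | append x row rest h => simp [insTab_cons_of_forall_le h, insRow_of_forall_le h]
  | bump x u b v rest hu hxb _ =>
    simp [insTab_append_cons_cons hu hxb, insRow_append_cons hu hxb]

/-- The multiset of entries of a tableau. -/
def entries (T : Tab) : Multiset ℕ := T.flatten

@[simp]
lemma entries_nil : entries [] = 0 := rfl

@[simp]
lemma entries_cons (row : List ℕ) (rest : Tab) : entries (row :: rest) = row + entries rest := by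
  simp [entries]

@[simp]
lemma entries_insTab (x : ℕ) (T : Tab) : entries (insTab x T).1 = x ::ₘ entries T := by
  induction x, T using insTab_induction with
  | nil x => rfl
  | append x row rest h =>
    simp only [insTab_cons_of_forall_le h, entries_cons, ← Multiset.coe_add,
      Multiset.coe_singleton, ← Multiset.singleton_add]
    abel
  | bump x u b v rest hu hxb ih =>
    simp only [insTab_append_cons_cons hu hxb, entries_cons, ih, ← Multiset.coe_add,
      ← Multiset.cons_coe, ← Multiset.singleton_add]
    abel

lemma pairwise_lt_append_cons_iff {α : Type*} [Preorder α] {x : α} {u v : List α} :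
    (u ++ x :: v).Pairwise (· < ·) ↔
      u.Pairwise (· < ·) ∧ (∀ y ∈ u, y < x) ∧ (∀ z ∈ v, x < z) ∧ v.Pairwise (· < ·) := by
  simp only [List.pairwise_append, List.pairwise_cons, List.forall_mem_cons]
  exact ⟨fun ⟨hu, ⟨hv, hsv⟩, huv⟩ => ⟨hu, fun y hy => (huv y hy).1, hv, hsv⟩,
    fun ⟨hu, hux, hv, hsv⟩ =>
      ⟨hu, ⟨hv, hsv⟩, fun y hy => ⟨hux y hy, fun z hz => (hux y hy).trans (hv z hz)⟩⟩⟩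

lemma isStdTab_insTab {x : ℕ} {T : Tab} (hT : IsStdTab T) (hx : (x ::ₘ entries T).Nodup) :
    IsStdTab (insTab x T).1 := by
  induction x, T using insTab_induction with
  | nil x => simp [insTab, isStdTab_cons]
  | append x row rest h =>
    rw [insTab_cons_of_forall_le h]
    rw [isStdTab_cons] at hT ⊢
    obtain ⟨-, hsort, hcol, hrest⟩ := hT
    have hlt : ∀ y ∈ row, y < x := fun y hy => (h y hy).lt_of_ne fun hyx => by simp_all
    exact ⟨by simp, List.pairwise_append.2 ⟨hsort, by simp, by simpa using hlt⟩,
      hcol.append_left _, hrest⟩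
  | bump x u b v rest hu hxb ih =>
    rw [insTab_append_cons_cons hu hxb]
    rw [isStdTab_cons, pairwise_lt_append_cons_iff] at hT ⊢
    obtain ⟨-, ⟨hsu, hub, hbv, hsv⟩, hcol, hrest⟩ := hT
    have hlt : ∀ y ∈ u, y < x := fun y hy => (hu y hy).lt_of_ne fun hyx => by simp_all
    refine ⟨by simp, ⟨hsu, hlt, fun z hz => hxb.trans (hbv z hz), hsv⟩, ?_, ih hrest ?_⟩
    · rw [headD_insTab]
      exact columnStrict_insRow hcol hub hxb
    · refine Multiset.nodup_of_le ?_ hx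
      rw [entries_cons, ← Multiset.coe_add, ← Multiset.cons_coe, Multiset.add_cons,
        Multiset.cons_add]
      exact (Multiset.cons_le_cons b (Multiset.le_add_left _ _)).trans (Multiset.le_cons_self _ x)

/-! ## Injectivity of insertion and recording -/

/-- Reverse row insertion: remove the last entry of row `k` and bump upwards. The result is the
entry expelled from the first row together with the remaining tableau. The values for a row `k`
outside the tableau are junk. -/
def uninsert : ℕ → Tab → ℕ × Tab
  | _, [] => (0, [])
  | 0, row :: rest =>
    (row.getLastD 0, if row.dropLast = [] then rest else row.dropLast :: rest)
  | k + 1, row :: rest =>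
    let q := uninsert k rest
    let u := row.takeWhile (· < q.1)
    (u.getLastD 0, (u.dropLast ++ q.1 :: row.dropWhile (· < q.1)) :: q.2)

lemma uninsert_insTab {x : ℕ} {T : Tab} (hT : IsStdTab T) :
    uninsert (insTab x T).2.1 (insTab x T).1 = (x, T) := by
  induction x, T using insTab_induction with
  | nil _ => rfl
  | append x row rest h => simp [insTab_cons_of_forall_le h, uninsert, (isStdTab_cons.1 hT).1]
  | bump x u b v rest hu hxb ih =>
    rw [isStdTab_cons, pairwise_lt_append_cons_iff] at hT
    obtain ⟨-, ⟨-, hub, hbv, -⟩, -, hrest⟩ := hT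
    have hsplit : u ++ x :: v = (u ++ [x]) ++ v := by simp
    have hlt : ∀ y ∈ u ++ [x], y < b := by simpa [or_imp, forall_and] using ⟨hub, hxb⟩
    have hge : v.takeWhile (· < b) = [] ∧ v.dropWhile (· < b) = v := by
      cases v with
      | nil => simp
      | cons z v => simp [(hbv z (by simp)).le]
    rw [insTab_append_cons_cons hu hxb]
    simp only [uninsert, ih hrest]
    rw [hsplit, List.takeWhile_append_of_pos (by simpa using hlt),
      List.dropWhile_append_of_pos (by simpa using hlt), hge.1, hge.2]
    simp

lemma insTab_injective {x x' : ℕ} {T T' : Tab} (hT : IsStdTab T) (hT' : IsStdTab T')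
    (htab : (insTab x T).1 = (insTab x' T').1) (hrow : (insTab x T).2.1 = (insTab x' T').2.1) :
    x = x' ∧ T = T' := by
  rw [← Prod.mk_inj, ← uninsert_insTab hT, ← uninsert_insTab hT', htab, hrow]

lemma insTab_row_le_length (x : ℕ) (T : Tab) : (insTab x T).2.1 ≤ T.length := by
  induction x, T using insTab_induction with
  | nil _ => simp [insTab]
  | append x row rest h => simp [insTab_cons_of_forall_le h]
  | bump x u b v rest hu hxb ih => simpa [insTab_append_cons_cons hu hxb] using ih

@[simp]
lemma place_nil (l : ℕ) (p : ℕ × ℕ) : place l p [] = [[l]] := by simp [place]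

@[simp]
lemma place_zero_cons (l c : ℕ) (row : List ℕ) (rest : Tab) :
    place l (0, c) (row :: rest) = (row ++ [l]) :: rest := by simp [place]

@[simp]
lemma place_succ_cons (l k c : ℕ) (row : List ℕ) (rest : Tab) :
    place l (k + 1, c) (row :: rest) = row :: place l (k, c) rest := by
  simp only [place, List.length_cons, add_lt_add_iff_right, List.set_cons_succ,
    List.getD_cons_succ, List.cons_append]
  split_ifs <;> rfl

@[simp]
lemma entries_place (l : ℕ) (p : ℕ × ℕ) (B : Tab) : entries (place l p B) = l ::ₘ entries B := by
  obtain ⟨k, c⟩ := p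
  induction B generalizing k with
  | nil => simp
  | cons row rest ih =>
    cases k with
    | zero =>
      simp only [place_zero_cons, entries_cons, ← Multiset.coe_add, Multiset.coe_singleton,
        ← Multiset.singleton_add]
      abel
    | succ k => simp [ih]

lemma map_length_insTab (x l : ℕ) {T B : Tab} (h : T.map List.length = B.map List.length) :
    (insTab x T).1.map List.length = (place l (insTab x T).2 B).map List.length := by
  induction x, T using insTab_induction generalizing B with
  | nil x => simp_all [insTab]
  | append x row rest hle =>
    obtain ⟨rowB, restB, rfl, hrow, hrest⟩ := List.map_eq_cons_iff.1 h.symm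
    simp [insTab_cons_of_forall_le hle, hrow, hrest]
  | bump x u b v rest hu hxb ih =>
    obtain ⟨rowB, restB, rfl, hrow, hrest⟩ := List.map_eq_cons_iff.1 h.symm
    simpa [insTab_append_cons_cons hu hxb, hrow] using ih hrest.symm

lemma headD_place (l : ℕ) (p : ℕ × ℕ) (B : Tab) :
    (place l p B).headD [] = B.headD [] ∨ (place l p B).headD [] = B.headD [] ++ [l] := by
  obtain ⟨_ | k, c⟩ := p <;> cases B <;> simp

lemma length_headD (T : Tab) : (T.headD []).length = (T.map List.length).headD 0 := by
  cases T <;> rfl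

lemma isStdTab_place {A B : Tab} {l : ℕ} {p : ℕ × ℕ} (hA : IsStdTab A) (hB : IsStdTab B)
    (hshape : A.map List.length = (place l p B).map List.length) (hl : ∀ m ∈ entries B, m < l) :
    IsStdTab (place l p B) := by
  obtain ⟨k, c⟩ := p
  induction B generalizing A k with
  | nil => simp [isStdTab_cons]
  | cons row rest ih =>
    rw [isStdTab_cons] at hB
    obtain ⟨hne, hsort, hcol, hrest⟩ := hB
    simp only [entries_cons, Multiset.mem_add, Multiset.mem_coe, or_imp, forall_and] at hl
    cases k with
    | zero =>
      rw [place_zero_cons, isStdTab_cons]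
      exact ⟨by simp, List.pairwise_append.2 ⟨hsort, by simp, by simpa using hl.1⟩,
        hcol.append_left _, hrest⟩
    | succ k =>
      rw [place_succ_cons] at hshape ⊢
      obtain ⟨rowA, restA, rfl, hrowA, hrestA⟩ := List.map_eq_cons_iff.1 hshape
      rw [isStdTab_cons] at hA ⊢
      refine ⟨hne, hsort, ?_, ih hA.2.2.2 hrest hl.2 k hrestA⟩
      rcases headD_place l (k, c) rest with hhead | hhead
      · rwa [hhead]
      · have hlen := hA.2.2.1.length_le
        rw [length_headD, hrestA, ← length_headD, hhead, hrowA] at hlen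
        rw [hhead]
        exact hcol.concat_right (by simpa using hlen) hl.1

lemma findIdx_place {l k c : ℕ} {B : Tab} (hl : l ∉ entries B) (hk : k ≤ B.length) :
    (place l (k, c) B).findIdx (l ∈ ·) = k := by
  induction B generalizing k with
  | nil => simp_all
  | cons row rest ih => cases k <;> simp_all [List.findIdx_cons]

lemma filter_map_erase_eq_self {l : ℕ} {B : Tab} (hB : IsStdTab B) (hl : l ∉ entries B) :
    (B.map (·.erase l)).filter (· ≠ []) = B := by
  induction B with
  | nil => rfl
  | cons row rest ih =>
    rw [isStdTab_cons] at hB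
    simp_all [List.erase_of_not_mem]

lemma filter_map_erase_place {l : ℕ} {p : ℕ × ℕ} {B : Tab} (hB : IsStdTab B)
    (hl : l ∉ entries B) : ((place l p B).map (·.erase l)).filter (· ≠ []) = B := by
  obtain ⟨k, c⟩ := p
  induction B generalizing k with
  | nil => simp
  | cons row rest ih =>
    obtain ⟨hne, -, -, hrest⟩ := isStdTab_cons.1 hB
    rw [entries_cons, Multiset.mem_add, Multiset.mem_coe, not_or] at hl
    cases k with
    | zero =>
      simpa [hne, List.erase_append_right _ hl.1] using filter_map_erase_eq_self hrest hl.2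
    | succ k => simpa [hne, List.erase_of_not_mem hl.1] using ih hrest hl.2 k

lemma place_injective {B B' : Tab} {l : ℕ} {p p' : ℕ × ℕ} (hB : IsStdTab B) (hB' : IsStdTab B')
    (hl : l ∉ entries B) (hl' : l ∉ entries B') (hp : p.1 ≤ B.length) (hp' : p'.1 ≤ B'.length)
    (h : place l p B = place l p' B') : p.1 = p'.1 ∧ B = B' := by
  have hBeq : B = B' := by
    rw [← filter_map_erase_place (p := p) hB hl, h, filter_map_erase_place hB' hl']
  have hrow : p.1 = p'.1 := by
    rw [← findIdx_place (c := p.2) hl hp, ← findIdx_place (c := p'.2) hl' hp', h]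
  exact ⟨hrow, hBeq⟩

/-! ## Surjectivity of insertion and recording -/

lemma exists_eq_append_cons_of_exists_lt {α : Type*} [LinearOrder α] {b : α} {row : List α}
    (hsort : row.Pairwise (· < ·)) (hb : b ∉ row) (hlt : ∃ y ∈ row, y < b) :
    ∃ u x v, row = u ++ x :: v ∧ x < b ∧ ∀ z ∈ v, b < z := by
  induction row with
  | nil => simp at hlt
  | cons y row ih =>
    rw [List.mem_cons, not_or] at hb
    by_cases hrow : ∃ z ∈ row, z < b
    · obtain ⟨u, x, v, rfl, hxb, hv⟩ := ih hsort.of_cons hb.2 hrow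
      exact ⟨y :: u, x, v, rfl, hxb, hv⟩
    · push Not at hrow
      refine ⟨[], y, row, rfl, ?_, fun z hz => (hrow z hz).lt_of_ne fun h => hb.2 (h ▸ hz)⟩
      obtain ⟨z, hz, hzb⟩ := hlt
      rcases List.mem_cons.1 hz with rfl | hz
      · exact hzb
      · exact absurd hzb (hrow z hz).not_gt

lemma exists_lt_of_columnStrict_insRow {b : ℕ} {row s : List ℕ}
    (h : ColumnStrict row (insRow b s).1) : ∃ y ∈ row, y < b := by
  obtain ⟨a, t, hab, hat⟩ := exists_insRow_eq_cons b s
  rw [hat] at h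
  cases h with
  | cons hya _ => exact ⟨_, by simp, hya.trans_le hab⟩

lemma pairwise_lt_headD {T : Tab} (hT : IsStdTab T) : (T.headD []).Pairwise (· < ·) := by
  cases T with
  | nil => simp
  | cons row rest => exact (isStdTab_cons.1 hT).2.1

lemma mem_entries_of_mem_headD {T : Tab} {m : ℕ} (hm : m ∈ T.headD []) : m ∈ entries T := by
  cases T <;> simp_all

lemma eq_nil_of_headD_eq_nil {T : Tab} (hT : IsStdTab T) (h : T.headD [] = []) : T = [] := by
  cases T with
  | nil => rfl
  | cons row rest => exact absurd h (isStdTab_cons.1 hT).1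

lemma exists_insTab_cons_eq {b : ℕ} {row : List ℕ} {T : Tab}
    (h : IsStdTab (row :: (insTab b T).1)) (hT : IsStdTab T) (hb : b ∉ row) :
    ∃ x row', row'.length = row.length ∧ IsStdTab (row' :: T) ∧
      (insTab x (row' :: T)).1 = row :: (insTab b T).1 ∧
      (insTab x (row' :: T)).2.1 = (insTab b T).2.1 + 1 := by
  rw [isStdTab_cons, headD_insTab] at h
  obtain ⟨-, hsort, hcol, -⟩ := h
  obtain ⟨u, x, v, rfl, hxb, hv⟩ := exists_eq_append_cons_of_exists_lt hsort hb
    (exists_lt_of_columnStrict_insRow hcol)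
  rw [pairwise_lt_append_cons_iff] at hsort
  obtain ⟨hsu, hux, -, hsv⟩ := hsort
  have hins := insTab_append_cons_cons (fun y hy => (hux y hy).le) hxb v T
  refine ⟨x, u ++ b :: v, by simp, isStdTab_cons.2 ⟨by simp, pairwise_lt_append_cons_iff.2
    ⟨hsu, fun y hy => (hux y hy).trans hxb, hv, hsv⟩, ?_, hT⟩, by rw [hins], by rw [hins]⟩
  exact columnStrict_of_insRow hcol hv (pairwise_lt_headD hT)

lemma exists_insTab_eq_of_length_head {row rowB : List ℕ} {rest restB : Tab}
    (hT : IsStdTab (row :: rest)) (hB : IsStdTab (rowB :: restB))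
    (hrow : row.length = rowB.length + 1) (hrest : rest.map List.length = restB.map List.length) :
    ∃ x T', IsStdTab T' ∧ T'.map List.length = (rowB :: restB).map List.length ∧
      (insTab x T').1 = row :: rest ∧ (insTab x T').2.1 = 0 := by
  obtain ⟨row', x, rfl⟩ : ∃ row' x, row = row' ++ [x] :=
    row.eq_nil_or_concat'.resolve_left (by rintro rfl; simp at hrow)
  obtain ⟨-, hsort, hcol, hstd⟩ := isStdTab_cons.1 hT
  obtain ⟨hneB, -, hcolB, -⟩ := isStdTab_cons.1 hB
  rw [pairwise_lt_append_cons_iff] at hsort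
  have hlen : row'.length = rowB.length := by simpa using hrow
  have hins := insTab_cons_of_forall_le (fun y hy => (hsort.2.1 y hy).le) rest
  refine ⟨x, row' :: rest, isStdTab_cons.2 ⟨?_, hsort.1, ?_, hstd⟩, by simp [hlen, hrest],
    by rw [hins], by rw [hins]⟩
  · rwa [← List.length_pos_iff, hlen, List.length_pos_iff]
  · refine hcol.of_append_left ?_
    rw [length_headD, hrest, ← length_headD, hlen]
    exact hcolB.length_le

lemma exists_insTab_eq_of_shape_place {T B : Tab} {l : ℕ} {p : ℕ × ℕ} (hT : IsStdTab T)
    (hnd : (entries T).Nodup) (hB : IsStdTab B) (hp : p.1 ≤ B.length)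
    (hshape : T.map List.length = (place l p B).map List.length) :
    ∃ x T', IsStdTab T' ∧ T'.map List.length = B.map List.length ∧
      (insTab x T').1 = T ∧ (insTab x T').2.1 = p.1 := by
  obtain ⟨k, c⟩ := p
  induction B generalizing T k with
  | nil =>
    obtain ⟨x, rfl⟩ : ∃ x, T = [[x]] := by
      simpa [List.map_eq_singleton_iff, List.length_eq_one_iff] using hshape
    exact ⟨x, [], by simp_all [insTab]⟩
  | cons rowB restB ih =>
    cases k with
    | zero =>
      rw [place_zero_cons] at hshape
      obtain ⟨row, rest, rfl, hrow, hrest⟩ := List.map_eq_cons_iff.1 hshape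
      exact exists_insTab_eq_of_length_head hT hB (by simpa using hrow) hrest
    | succ k =>
      rw [place_succ_cons] at hshape
      obtain ⟨row, rest, rfl, hrow, hrest⟩ := List.map_eq_cons_iff.1 hshape
      rw [entries_cons, Multiset.nodup_add] at hnd
      obtain ⟨b, T', hT', hshape', rfl, hk⟩ := ih (isStdTab_cons.1 hT).2.2.2 hnd.2.1
        (isStdTab_cons.1 hB).2.2.2 k (by simpa using hp) hrest
      have hb : b ∉ row := fun hb =>
        Multiset.disjoint_left.1 hnd.2.2 (Multiset.mem_coe.2 hb) (by simp)
      obtain ⟨x, row', hlen, hstd, hins, hidx⟩ := exists_insTab_cons_eq hT hT' hb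
      exact ⟨x, row' :: T', hstd, by simp [hlen, hrow, hshape'], hins, by rw [hidx, hk]⟩

lemma exists_place_eq {T : Tab} {l : ℕ} (hT : IsStdTab T) (hl : l ∈ entries T)
    (hmax : ∀ m ∈ entries T, m ≤ l) :
    ∃ B k, IsStdTab B ∧ k ≤ B.length ∧ ∀ c, place l (k, c) B = T := by
  induction T with
  | nil => simp at hl
  | cons row rest ih =>
    obtain ⟨hne, hsort, hcol, hrest⟩ := isStdTab_cons.1 hT
    simp only [entries_cons, Multiset.mem_add, Multiset.mem_coe, or_imp, forall_and] at hl hmax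
    by_cases hlrest : l ∈ entries rest
    · obtain ⟨B, k, hB, hk, hplace⟩ := ih hrest hlrest hmax.2
      refine ⟨row :: B, k + 1, isStdTab_cons.2 ⟨hne, hsort, ?_, hB⟩, by simpa using hk,
        by simp [hplace]⟩
      rcases headD_place l (k, 0) B with hhead | hhead <;> rw [hplace] at hhead <;>
        rw [hhead] at hcol
      exacts [hcol, hcol.of_append_right]
    · obtain ⟨u, v, rfl⟩ := List.append_of_mem (hl.resolve_right hlrest)
      rw [pairwise_lt_append_cons_iff] at hsort
      obtain rfl : v = [] := List.eq_nil_iff_forall_not_mem.2 fun z hz =>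
        (hsort.2.2.1 z hz).not_ge (hmax.1 z (by simp [hz]))
      have hcol' : ColumnStrict u (rest.headD []) := hcol.of_concat_left fun m hm =>
        hmax.2 m (mem_entries_of_mem_headD hm)
      rcases u.eq_nil_or_concat' with rfl | ⟨u', y, rfl⟩
      · obtain rfl : rest = [] := eq_nil_of_headD_eq_nil hrest (by simpa using hcol')
        exact ⟨[], 0, by simp⟩
      · exact ⟨_ :: rest, 0, isStdTab_cons.2 ⟨by simp, hsort.1, hcol', hrest⟩, by simp, by simp⟩

/-! ## Coloured words -/

/-- A pair of standard tableaux of the same shape. -/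
def IsRSPair (p : Tab × Tab) : Prop :=
  IsStdTab p.1 ∧ IsStdTab p.2 ∧ p.1.map List.length = p.2.map List.length

/-- One step of the classical Robinson–Schensted algorithm: insert `x` into the first tableau and
record the new box in the second one by the label `l`. -/
def rsInsert (x l : ℕ) (p : Tab × Tab) : Tab × Tab :=
  ((insTab x p.1).1, place l (insTab x p.1).2 p.2)

section rsInsert

variable {x x' l : ℕ} {p p' : Tab × Tab}

lemma isRSPair_rsInsert (hp : IsRSPair p) (hx : (x ::ₘ entries p.1).Nodup)
    (hl : ∀ m ∈ entries p.2, m < l) : IsRSPair (rsInsert x l p) :=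
  have hA := isStdTab_insTab hp.1 hx
  have hshape := map_length_insTab x l hp.2.2
  ⟨hA, isStdTab_place hA hp.2.1 hshape hl, hshape⟩

lemma insTab_row_le_length_of_isRSPair (hp : IsRSPair p) (x : ℕ) :
    (insTab x p.1).2.1 ≤ p.2.length := by
  simpa [← List.length_map (f := List.length) (as := p.2), ← hp.2.2]
    using insTab_row_le_length x p.1

lemma rsInsert_injective (hp : IsRSPair p) (hp' : IsRSPair p') (hl : l ∉ entries p.2)
    (hl' : l ∉ entries p'.2) (h : rsInsert x l p = rsInsert x' l p') : x = x' ∧ p = p' := by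
  obtain ⟨hA, hB⟩ := Prod.mk_inj.1 h
  obtain ⟨hrow, hB⟩ := place_injective hp.2.1 hp'.2.1 hl hl'
    (insTab_row_le_length_of_isRSPair hp x) (insTab_row_le_length_of_isRSPair hp' x') hB
  obtain ⟨hx, hA⟩ := insTab_injective hp.1 hp'.1 hA hrow
  exact ⟨hx, Prod.ext hA hB⟩

lemma exists_rsInsert_eq (hp : IsRSPair p) (hnd : (entries p.1).Nodup) (hl : l ∈ entries p.2)
    (hmax : ∀ m ∈ entries p.2, m ≤ l) : ∃ x p', IsRSPair p' ∧ rsInsert x l p' = p := by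
  obtain ⟨B, k, hB, hk, hplace⟩ := exists_place_eq hp.2.1 hl hmax
  obtain ⟨x, A, hA, hshape, hins, rfl⟩ := exists_insTab_eq_of_shape_place (p := (k, 0)) hp.1 hnd
    hB hk (by rw [hplace, hp.2.2])
  exact ⟨x, (A, B), ⟨hA, hB, hshape⟩, Prod.ext hins (hplace _)⟩

end rsInsert

section Colored

variable {ι : Type*}

section IsRSState

variable [Fintype ι]

/-- A family of pairs of standard tableaux of the same shape whose insertion tableaux together
have the entries `L`, and whose recording tableaux together have the entries `1, …, |L|`. -/
def IsRSState (S : ι → Tab × Tab) (L : Multiset ℕ) : Prop :=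
  (∀ c, IsRSPair (S c)) ∧ ∑ c, entries (S c).1 = L ∧
    ∑ c, entries (S c).2 = (List.range' 1 L.card : Multiset ℕ)

variable {S : ι → Tab × Tab} {L : Multiset ℕ}

lemma IsRSState.entries_fst_le (hS : IsRSState S L) (c : ι) : entries (S c).1 ≤ L := by
  rw [← hS.2.1]
  exact Finset.single_le_sum (f := fun c => entries (S c).1) (fun _ _ => Multiset.zero_le _)
    (Finset.mem_univ c)

lemma IsRSState.le_card_of_mem_entries_snd (hS : IsRSState S L) {c : ι} {m : ℕ}
    (hm : m ∈ entries (S c).2) : m ≤ L.card := by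
  have hsum : m ∈ ∑ c, entries (S c).2 := Multiset.mem_sum.2 ⟨c, Finset.mem_univ c, hm⟩
  rw [hS.2.2, Multiset.mem_coe, List.mem_range'_1] at hsum
  omega

lemma IsRSState.card_succ_notMem (hS : IsRSState S L) (c : ι) :
    L.card + 1 ∉ entries (S c).2 := fun h =>
  Nat.not_succ_le_self _ (hS.le_card_of_mem_entries_snd h)

lemma eq_nil_of_entries_eq_zero {T : Tab} (hT : IsStdTab T) (h : entries T = 0) : T = [] := by
  cases T with
  | nil => rfl
  | cons row rest => simp_all [isStdTab_cons]

lemma isRSState_zero_iff : IsRSState S 0 ↔ S = fun _ => ([], []) := by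
  constructor
  · rintro ⟨hpair, hfst, hsnd⟩
    simp only [Multiset.card_zero, List.range'_zero, Multiset.coe_nil, Finset.sum_eq_zero_iff,
      Finset.mem_univ, true_imp_iff] at hfst hsnd
    exact funext fun c => Prod.ext (eq_nil_of_entries_eq_zero (hpair c).1 (hfst c))
      (eq_nil_of_entries_eq_zero (hpair c).2.1 (hsnd c))
  · rintro rfl
    simp [IsRSState, IsRSPair]

end IsRSState

variable [DecidableEq ι]

/-- One step of the Robinson–Schensted algorithm for coloured letters: the letter `p.2` of colour
`p.1` goes into the pair of tableaux of that colour, with label `l`. -/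
def rsStep (l : ℕ) (p : ι × ℕ) (S : ι → Tab × Tab) : ι → Tab × Tab :=
  Function.update S p.1 (rsInsert p.2 l (S p.1))

/-- The coloured Robinson–Schensted correspondence. Words are read from right to left, so that
`cons` appends a letter. -/
def rsWord : List (ι × ℕ) → ι → Tab × Tab
  | [] => fun _ => ([], [])
  | p :: w => rsStep (w.length + 1) p (rsWord w)

variable {S S' : ι → Tab × Tab} {L : Multiset ℕ} {p p' : ι × ℕ} {l : ℕ}

lemma rsStep_self (l : ℕ) (p : ι × ℕ) (S : ι → Tab × Tab) :
    rsStep l p S p.1 = rsInsert p.2 l (S p.1) :=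
  Function.update_self ..

lemma rsStep_of_ne {c : ι} (h : c ≠ p.1) (l : ℕ) (S : ι → Tab × Tab) : rsStep l p S c = S c :=
  Function.update_of_ne h ..

lemma mem_entries_snd_rsStep_iff (hl : ∀ c, l ∉ entries (S c).2) {c : ι} :
    l ∈ entries (rsStep l p S c).2 ↔ c = p.1 := by
  rcases eq_or_ne c p.1 with rfl | hc
  · simp [rsStep_self, rsInsert]
  · simp [rsStep_of_ne hc, hl, hc]

lemma rsStep_injective (hS : ∀ c, IsRSPair (S c)) (hS' : ∀ c, IsRSPair (S' c))
    (hl : ∀ c, l ∉ entries (S c).2) (hl' : ∀ c, l ∉ entries (S' c).2)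
    (h : rsStep l p S = rsStep l p' S') : p = p' ∧ S = S' := by
  obtain ⟨c, x⟩ := p
  obtain ⟨c', x'⟩ := p'
  obtain rfl : c = c' := by
    rw [← mem_entries_snd_rsStep_iff (p := (c', x')) hl', ← h, mem_entries_snd_rsStep_iff hl]
  have hc : rsInsert x l (S c) = rsInsert x' l (S' c) := by
    simpa [rsStep] using congrFun h c
  obtain ⟨rfl, hSc⟩ := rsInsert_injective (hS c) (hS' c) (hl c) (hl' c) hc
  refine ⟨rfl, funext fun d => ?_⟩
  rcases eq_or_ne d c with rfl | hd
  · exact hSc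
  · simpa [rsStep, hd] using congrFun h d

lemma exists_rsStep_eq (hS : ∀ c, IsRSPair (S c)) (c : ι) (hnd : (entries (S c).1).Nodup)
    (hl : l ∈ entries (S c).2) (hmax : ∀ m ∈ entries (S c).2, m ≤ l) :
    ∃ x S', (∀ c, IsRSPair (S' c)) ∧ rsStep l (c, x) S' = S := by
  obtain ⟨x, q, hq, hins⟩ := exists_rsInsert_eq (hS c) hnd hl hmax
  refine ⟨x, Function.update S c q, fun d => ?_, by simp [rsStep, hins]⟩
  rcases eq_or_ne d c with rfl | hd
  · simpa using hq
  · simpa [hd] using hS d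

section IsRSState

variable [Fintype ι]

lemma sum_update_of_eq_add {β M : Type*} [AddCommMonoid M] {f : β → M} {S : ι → β} {i : ι} {b : β}
    {a : M} (h : f b = a + f (S i)) :
    ∑ j, f (Function.update S i b j) = a + ∑ j, f (S j) := by
  rw [← Finset.add_sum_erase _ (fun j => f (S j)) (Finset.mem_univ i), ← add_assoc, ← h,
    ← Finset.add_sum_erase _ _ (Finset.mem_univ i), Function.update_self]
  congr 1
  exact Finset.sum_congr rfl fun j hj => by rw [Function.update_of_ne (Finset.ne_of_mem_erase hj)]

lemma sum_entries_fst_rsStep (l : ℕ) (p : ι × ℕ) (S : ι → Tab × Tab) :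
    ∑ c, entries (rsStep l p S c).1 = p.2 ::ₘ ∑ c, entries (S c).1 := by
  rw [← Multiset.singleton_add]
  exact sum_update_of_eq_add (f := fun q : Tab × Tab => entries q.1) (by simp [rsInsert])

lemma sum_entries_snd_rsStep (l : ℕ) (p : ι × ℕ) (S : ι → Tab × Tab) :
    ∑ c, entries (rsStep l p S c).2 = l ::ₘ ∑ c, entries (S c).2 := by
  rw [← Multiset.singleton_add]
  exact sum_update_of_eq_add (f := fun q : Tab × Tab => entries q.2) (by simp [rsInsert])

lemma coe_range'_one_succ (m : ℕ) :
    (List.range' 1 (m + 1) : Multiset ℕ) = (m + 1) ::ₘ (List.range' 1 m : Multiset ℕ) := by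
  rw [List.range'_1_concat, add_comm 1, Multiset.cons_coe, Multiset.coe_eq_coe]
  exact List.perm_append_singleton _ _

lemma isRSState_rsStep (hS : IsRSState S L) (hnd : (p.2 ::ₘ L).Nodup) :
    IsRSState (rsStep (L.card + 1) p S) (p.2 ::ₘ L) := by
  refine ⟨fun c => ?_, by rw [sum_entries_fst_rsStep, hS.2.1], ?_⟩
  · rcases eq_or_ne c p.1 with rfl | hc
    · rw [rsStep_self]
      exact isRSPair_rsInsert (hS.1 _)
        (Multiset.nodup_of_le (Multiset.cons_le_cons _ (hS.entries_fst_le _)) hnd)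
        fun m hm => Nat.lt_succ_of_le (hS.le_card_of_mem_entries_snd hm)
    · rw [rsStep_of_ne hc]
      exact hS.1 c
  · rw [sum_entries_snd_rsStep, hS.2.2, Multiset.card_cons, coe_range'_one_succ]

lemma exists_rsStep_eq_of_isRSState {m : ℕ} (hS : IsRSState S L) (hL : L.Nodup)
    (hcard : L.card = m + 1) :
    ∃ p S' L', IsRSState S' L' ∧ p.2 ::ₘ L' = L ∧ rsStep (m + 1) p S' = S := by
  have hmem : m + 1 ∈ ∑ c, entries (S c).2 := by simp [hS.2.2, hcard, coe_range'_one_succ]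
  obtain ⟨c, -, hc⟩ := Multiset.mem_sum.1 hmem
  obtain ⟨x, S', hS', rfl⟩ := exists_rsStep_eq hS.1 c
    (Multiset.nodup_of_le (hS.entries_fst_le c) hL) hc
    fun k hk => hcard ▸ hS.le_card_of_mem_entries_snd hk
  have hfst := hS.2.1
  rw [sum_entries_fst_rsStep] at hfst
  have hcard' : (∑ c, entries (S' c).1).card = m := by simpa [← hfst] using hcard
  have hsnd := hS.2.2
  rw [sum_entries_snd_rsStep, hcard, coe_range'_one_succ, Multiset.cons_inj_right] at hsnd
  exact ⟨(c, x), S', _, ⟨hS', rfl, by rw [hsnd, hcard']⟩, hfst, rfl⟩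

lemma isRSState_rsWord {w : List (ι × ℕ)} (hw : (w.map Prod.snd).Nodup) :
    IsRSState (rsWord w) (w.map Prod.snd) := by
  induction w with
  | nil => exact isRSState_zero_iff.2 rfl
  | cons p w ih =>
    simpa [rsWord] using isRSState_rsStep (ih (List.nodup_cons.1 hw).2) hw

lemma exists_rsWord_eq (hS : IsRSState S L) (hL : L.Nodup) :
    ∃ w : List (ι × ℕ), (w.map Prod.snd : Multiset ℕ) = L ∧ rsWord w = S := by
  induction hm : L.card generalizing S L with
  | zero =>
    obtain rfl := Multiset.card_eq_zero.1 hm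
    exact ⟨[], rfl, (isRSState_zero_iff.1 hS).symm⟩
  | succ m ih =>
    obtain ⟨p, S', L', hS', rfl, rfl⟩ := exists_rsStep_eq_of_isRSState hS hL hm
    have hcard : L'.card = m := by simpa using hm
    obtain ⟨w, rfl, rfl⟩ := ih hS' (Multiset.nodup_cons.1 hL).2 hcard
    exact ⟨p :: w, rfl, by rw [rsWord, ← hcard]; simp⟩

end IsRSState

lemma rsWord_injective [Finite ι] {w w' : List (ι × ℕ)} (hw : (w.map Prod.snd).Nodup)
    (hw' : (w'.map Prod.snd).Nodup) (hlen : w.length = w'.length) (h : rsWord w = rsWord w') :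
    w = w' := by
  have := Fintype.ofFinite ι
  induction w generalizing w' with
  | nil => exact (List.length_eq_zero_iff.1 hlen.symm).symm
  | cons p w ih =>
    obtain - | ⟨p', w'⟩ := w'
    · simp at hlen
    have hlen' : w.length = w'.length := by simpa using hlen
    have hS := isRSState_rsWord (List.nodup_cons.1 hw).2
    have hS' := isRSState_rsWord (List.nodup_cons.1 hw').2
    rw [rsWord, rsWord, hlen'] at h
    obtain ⟨rfl, hww'⟩ := rsStep_injective hS.1 hS'.1
      (by simpa [hlen'] using hS.card_succ_notMem) (by simpa using hS'.card_succ_notMem) h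
    rw [ih (List.nodup_cons.1 hw).2 (List.nodup_cons.1 hw').2 hlen' hww']

theorem rsWord_bijOn [Fintype ι] (hL : L.Nodup) :
    Set.BijOn rsWord {w : List (ι × ℕ) | (w.map Prod.snd : Multiset ℕ) = L}
      {S | IsRSState S L} := by
  refine ⟨?_, ?_, fun S hS => exists_rsWord_eq hS hL⟩
  · rintro w rfl
    exact isRSState_rsWord hL
  · rintro w rfl w' hw' h
    have hperm : (w'.map Prod.snd).Perm (w.map Prod.snd) := Multiset.coe_eq_coe.1 hw'
    exact rsWord_injective hL (hperm.nodup_iff.2 hL) (by simpa using hperm.length_eq.symm) h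

end Colored

/-! ## Signed permutations -/

section Signed

/-- An integer as a coloured letter: its absolute value, with colour `true` for a minus sign
(and for `0`, as in `RSstep`). -/
def signedLetter (v : ℤ) : Bool × ℕ := (decide (v ≤ 0), v.natAbs)

lemma signedLetter_injective : Function.Injective signedLetter := by
  intro v v' h
  simp only [signedLetter, Prod.mk.injEq, decide_eq_decide] at h
  omega

/-- The window notation `π(1), …, π(n)` as a word of signed letters, in reversed order. -/
def signedWord (n : ℕ) (π : P) : List (Bool × ℕ) :=
  ((List.range' 1 n).map fun i : ℕ => signedLetter (π i)).reverse

lemma apply_zero_of_mem_Wset {n : ℕ} {π : P} (hπ : π ∈ Wset n) : π 0 = 0 := by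
  have := hπ.1 0
  rw [neg_zero] at this
  omega

lemma apply_eq_self_of_mem_Wset {n : ℕ} {π : P} (hπ : π ∈ Wset n) {i : ℤ} (hi : n < i.natAbs) :
    π i = i :=
  hπ.2 i (by rw [Int.abs_eq_natAbs]; exact_mod_cast hi)

lemma natAbs_apply_le_of_mem_Wset {n : ℕ} {π : P} (hπ : π ∈ Wset n) {i : ℤ}
    (hi : i.natAbs ≤ n) : (π i).natAbs ≤ n := by
  by_contra! hlt
  exact hi.not_gt (π.injective (apply_eq_self_of_mem_Wset hπ hlt) ▸ hlt)

lemma Wset_ext {n : ℕ} {π π' : P} (hπ : π ∈ Wset n) (hπ' : π' ∈ Wset n)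
    (h : ∀ i : ℕ, 1 ≤ i → i ≤ n → π i = π' i) : π = π' := by
  have hnat : ∀ i : ℕ, π i = π' i := fun i => by
    rcases Nat.eq_zero_or_pos i with rfl | hi
    · simp [apply_zero_of_mem_Wset hπ, apply_zero_of_mem_Wset hπ']
    rcases le_or_gt i n with hin | hni
    · exact h i hi hin
    · have hni' : n < (i : ℤ).natAbs := by simpa using hni
      rw [apply_eq_self_of_mem_Wset hπ hni', apply_eq_self_of_mem_Wset hπ' hni']
  ext i
  obtain ⟨m, rfl | rfl⟩ := i.eq_nat_or_neg
  · exact hnat m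
  · rw [hπ.1, hπ'.1, hnat]

lemma signedWord_mapsTo (n : ℕ) : Set.MapsTo (signedWord n) (Wset n)
    {w | (w.map Prod.snd : Multiset ℕ) = List.range' 1 n} := by
  intro π hπ
  have hmap : (signedWord n π).map Prod.snd =
      ((List.range' 1 n).map fun i : ℕ => (π i).natAbs).reverse := by
    simp [signedWord, signedLetter, Function.comp_def]
  have hnd : ((List.range' 1 n).map fun i : ℕ => (π i).natAbs).Nodup := by
    refine List.Nodup.map_on (fun i hi j hj hij => ?_) List.nodup_range'
    rw [List.mem_range'_1] at hi hj
    rcases Int.natAbs_eq_natAbs_iff.1 hij with h | h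
    · exact_mod_cast π.injective h
    · rw [← hπ.1] at h
      have := π.injective h
      omega
  have hsub : ((List.range' 1 n).map fun i : ℕ => (π i).natAbs) ⊆ List.range' 1 n := by
    intro m hm
    obtain ⟨i, hi, rfl⟩ := List.mem_map.1 hm
    rw [List.mem_range'_1] at hi ⊢
    have hne : π i ≠ 0 := fun h => by
      have := π.injective (h.trans (apply_zero_of_mem_Wset hπ).symm)
      omega
    have hle := natAbs_apply_le_of_mem_Wset hπ (i := i) (by omega)
    omega
  refine Multiset.coe_eq_coe.2 ?_
  rw [hmap]
  exact (List.reverse_perm _).trans ((List.subperm_of_subset hnd hsub).perm_of_length_le (by simp))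

lemma signedWord_injOn (n : ℕ) : Set.InjOn (signedWord n) (Wset n) := by
  intro π hπ π' hπ' h
  refine Wset_ext hπ hπ' fun i hi hin => signedLetter_injective ?_
  exact List.map_inj_left.1 (List.reverse_injective h) i (by rw [List.mem_range'_1]; omega)

/-- The integer encoded by a signed letter, see `signedLetter`. -/
def letterValue (p : Bool × ℕ) : ℤ := if p.1 then -p.2 else p.2

lemma natAbs_letterValue (p : Bool × ℕ) : (letterValue p).natAbs = p.2 := by
  unfold letterValue; split_ifs <;> simp

lemma signedLetter_letterValue {p : Bool × ℕ} (hp : p.2 ≠ 0) :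
    signedLetter (letterValue p) = p := by
  obtain ⟨_ | _, m⟩ := p <;> simp_all [signedLetter, letterValue]

lemma exists_mem_Wset_of_bijOn {n : ℕ} {F : ℤ → ℤ} (hodd : ∀ i, F (-i) = -F i)
    (hF : Set.BijOn F {i | i.natAbs ≤ n} {i | i.natAbs ≤ n}) :
    ∃ π ∈ Wset n, ∀ i : ℤ, i.natAbs ≤ n → π i = F i := by
  let π : P := Equiv.Perm.ofSubtype (p := fun i : ℤ => i.natAbs ≤ n) hF.equiv
  have hin : ∀ i : ℤ, i.natAbs ≤ n → π i = F i := fun i hi =>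
    Equiv.Perm.ofSubtype_apply_of_mem (p := fun i : ℤ => i.natAbs ≤ n) hF.equiv hi
  have hout : ∀ i : ℤ, ¬ i.natAbs ≤ n → π i = i := fun i hi =>
    Equiv.Perm.ofSubtype_apply_of_not_mem (p := fun i : ℤ => i.natAbs ≤ n) hF.equiv hi
  refine ⟨π, ⟨fun i => ?_, fun i hi => hout i ?_⟩, hin⟩
  · by_cases hi : i.natAbs ≤ n
    · rw [hin i hi, hin (-i) (by rwa [Int.natAbs_neg]), hodd]
    · rw [hout i hi, hout (-i) (by rwa [Int.natAbs_neg])]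
  · rw [Int.abs_eq_natAbs] at hi
    omega

lemma exists_mem_Wset_of_perm {n : ℕ} {f : ℕ → ℤ}
    (hf : ((List.range' 1 n).map fun i => (f i).natAbs).Perm (List.range' 1 n)) :
    ∃ π ∈ Wset n, ∀ i : ℕ, 1 ≤ i → i ≤ n → π i = f i := by
  let F : ℤ → ℤ := fun i => i.sign * f i.natAbs
  have hodd : ∀ i, F (-i) = -F i := fun i => by simp [F]
  have hpos : ∀ i : ℕ, 1 ≤ i → F i = f i := fun i hi => by
    simp [F, Int.sign_natCast_of_ne_zero (Nat.one_le_iff_ne_zero.1 hi)]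
  have hmaps : Set.MapsTo F {i | i.natAbs ≤ n} {i | i.natAbs ≤ n} := by
    intro i (hi : i.natAbs ≤ n)
    rcases eq_or_ne i 0 with rfl | hi0
    · simp [F]
    · have hmem : (f i.natAbs).natAbs ∈ List.range' 1 n := hf.subset
        (List.mem_map_of_mem (f := fun i => (f i).natAbs) (by rw [List.mem_range'_1]; omega))
      rw [List.mem_range'_1] at hmem
      change (F i).natAbs ≤ n
      simp only [F, Int.natAbs_mul, Int.natAbs_sign_of_ne_zero hi0]
      omega
  have hsurj : Set.SurjOn F {i | i.natAbs ≤ n} {i | i.natAbs ≤ n} := by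
    intro m (hm : m.natAbs ≤ n)
    rcases eq_or_ne m 0 with rfl | hm0
    · exact ⟨0, by simp [F]⟩
    obtain ⟨i, hi, him⟩ := List.mem_map.1
      (hf.symm.subset (by rw [List.mem_range'_1]; omega : m.natAbs ∈ List.range' 1 n))
    rw [List.mem_range'_1] at hi
    rcases Int.natAbs_eq_natAbs_iff.1 him with h | h
    · exact ⟨i, show (i : ℤ).natAbs ≤ n by omega, by rw [hpos i hi.1, h]⟩
    · exact ⟨-i, show (-(i : ℤ)).natAbs ≤ n by omega, by rw [hodd, hpos i hi.1, h, neg_neg]⟩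
  have hfin : {i : ℤ | i.natAbs ≤ n}.Finite :=
    (Set.finite_Icc (-n : ℤ) n).subset fun i (hi : i.natAbs ≤ n) => ⟨by omega, by omega⟩
  obtain ⟨π, hπ, hπF⟩ :=
    exists_mem_Wset_of_bijOn hodd ((hfin.surjOn_iff_bijOn_of_mapsTo hmaps).1 hsurj)
  exact ⟨π, hπ, fun i hi hin => by rw [hπF i (by simpa using hin), hpos i hi]⟩

lemma map_getD_range'_one {α : Type*} (v : List α) (a : α) :
    ((List.range' 1 v.length).map fun i => v.getD (i - 1) a) = v :=
  List.ext_getElem (by simp) fun i _ hi => by simp [hi]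

lemma signedWord_surjOn (n : ℕ) : Set.SurjOn (signedWord n) (Wset n)
    {w | (w.map Prod.snd : Multiset ℕ) = List.range' 1 n} := by
  intro w hw
  have hperm : (w.map Prod.snd).Perm (List.range' 1 n) := Multiset.coe_eq_coe.1 hw
  let letter : ℕ → Bool × ℕ := fun i => w.reverse.getD (i - 1) (false, 0)
  have hletter : (List.range' 1 n).map letter = w.reverse := by
    have hlen : w.reverse.length = n := by simpa using hperm.length_eq
    exact hlen ▸ map_getD_range'_one w.reverse (false, 0)
  have hsnd : (List.range' 1 n).map (fun i => (letter i).2) = (w.map Prod.snd).reverse := by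
    rw [← List.map_reverse, ← hletter, List.map_map]
    rfl
  obtain ⟨π, hπ, hπw⟩ := exists_mem_Wset_of_perm (n := n)
      (f := fun i => letterValue (letter i)) <| by
    simp only [natAbs_letterValue, hsnd]
    exact (List.reverse_perm _).trans hperm
  refine ⟨π, hπ, ?_⟩
  rw [signedWord, ← w.reverse_reverse, ← hletter]
  congr 1
  refine List.map_congr_left fun i hi => ?_
  have hne : (letter i).2 ≠ 0 := by
    have hmem : (letter i).2 ∈ List.range' 1 n := hperm.subset <| List.mem_reverse.1 <|
      hsnd ▸ List.mem_map_of_mem (f := fun i => (letter i).2) hi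
    rw [List.mem_range'_1] at hmem
    omega
  rw [List.mem_range'_1] at hi
  rw [hπw i hi.1 (by omega), signedLetter_letterValue hne]

theorem signedWord_bijOn (n : ℕ) : Set.BijOn (signedWord n) (Wset n)
    {w | (w.map Prod.snd : Multiset ℕ) = List.range' 1 n} :=
  ⟨signedWord_mapsTo n, signedWord_injOn n, signedWord_surjOn n⟩

end Signed

section Bitableaux

/-- A pair of tableaux for each sign, regrouped as an insertion bitableau and a recording
bitableau; the colour `false` is the sign `+`, as in `signedLetter`. -/
def bitableauEquiv : (Bool → Tab × Tab) ≃ (Tab × Tab) × (Tab × Tab) :=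
  (Equiv.boolArrowEquivProd (Tab × Tab)).trans (Equiv.prodProdProdComm ..)

lemma bitableauEquiv_apply (S : Bool → Tab × Tab) :
    bitableauEquiv S = (((S false).1, (S true).1), ((S false).2, (S true).2)) :=
  rfl

lemma RSstep_bitableauEquiv (π : P) (S : Bool → Tab × Tab) (i : ℕ) :
    RSstep π (bitableauEquiv S) i = bitableauEquiv (rsStep i (signedLetter (π i)) S) := by
  rcases lt_or_ge 0 (π i) with h | h
  · simp [RSstep, bitableauEquiv_apply, rsStep, rsInsert, signedLetter, h, h.not_ge]
  · simp [RSstep, bitableauEquiv_apply, rsStep, rsInsert, signedLetter, h, h.not_gt]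

lemma signedWord_succ (n : ℕ) (π : P) :
    signedWord (n + 1) π = signedLetter (π (n + 1 : ℕ)) :: signedWord n π := by
  simp [signedWord, List.range'_1_concat, add_comm]

lemma RSfull_eq (n : ℕ) (π : P) : RSfull n π = bitableauEquiv (rsWord (signedWord n π)) := by
  induction n with
  | zero => rfl
  | succ n ih =>
    have hsucc : RSfull (n + 1) π = RSstep π (RSfull n π) (n + 1) := by
      simp [RSfull, List.range_succ]
    have hlen : (signedWord n π).length = n := by simp [signedWord]
    rw [hsucc, ih, RSstep_bitableauEquiv, signedWord_succ, rsWord, hlen]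

lemma isNStdBitab_iff {n : ℕ} {T : Tab × Tab} : IsNStdBitab n T ↔
    IsStdTab T.1 ∧ IsStdTab T.2 ∧ entries T.1 + entries T.2 = (List.range' 1 n : Multiset ℕ) := by
  rw [IsNStdBitab, ← Multiset.coe_eq_coe]
  rfl

lemma bijOn_bitableauEquiv (n : ℕ) : Set.BijOn bitableauEquiv
    {S | IsRSState S (List.range' 1 n : Multiset ℕ)}
    {p | IsNStdBitab n p.1 ∧ IsNStdBitab n p.2 ∧ shape2 p.1 = shape2 p.2} := by
  refine bitableauEquiv.bijOn fun S => ?_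
  change IsNStdBitab n _ ∧ IsNStdBitab n _ ∧ shape2 _ = shape2 _ ↔ IsRSState S _
  simp only [isNStdBitab_iff, bitableauEquiv_apply, shape2, Prod.mk.injEq, IsRSState, IsRSPair,
    Bool.forall_bool, Fintype.sum_bool, Multiset.coe_card, List.length_range',
    add_comm (entries (S true).1), add_comm (entries (S true).2)]
  tauto

end Bitableaux

/-- The map `π ↦ (A_n(π), B_n(π))` is a bijection from `W_n`
onto the set of all pairs of `n`-standard bitableaux having the same shape. -/
theorem generalized_RS_bijective (n : ℕ) (hn : 1 ≤ n) :
    Set.BijOn (fun π => (Atab n π, Btab n π)) (Wset n)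
      {p : (Tab × Tab) × (Tab × Tab) |
        IsNStdBitab n p.1 ∧ IsNStdBitab n p.2 ∧ shape2 p.1 = shape2 p.2} := by
  have hcomp : (fun π => (Atab n π, Btab n π)) = bitableauEquiv ∘ rsWord ∘ signedWord n :=
    funext (RSfull_eq n)
  have hnodup : (List.range' 1 n : Multiset ℕ).Nodup := List.nodup_range'
  rw [hcomp]
  exact (bijOn_bitableauEquiv n).comp ((rsWord_bijOn hnodup).comp (signedWord_bijOn n))
end

section
/- The number of generalized Robinson–Schensted cells of W_n, i.e. the number of distinct values taken by the map π ↦ B_n(π) on W_n, equals the number of elements w ∈ W_n with w² = 1. -/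
open scoped Classical

/-!
The bitableau `B_n(π)` is determined by the sequence of boxes created during the insertion, and the
sequences that occur are exactly the saturated chains of length `n` starting from `∅` in the square
of Young's lattice. To realize a prescribed chain, order the absolute values of `π` by the column of
the box to be created and, inside each column, put the later ones first: then every insertion pushes
down a single column.

Both sides therefore satisfy `a (n + 1) = 2 * a n + 2 * n * a (n - 1)`. For the chains this follows
from Stanley's relation `D U = U D + 2` for the operators of adding and removing a box; for the
involutions, it comes from distinguishing whether a chosen point `s` is sent to `± s` or to `± t`
with `t ≠ s`.
-/

namespace RobinsonSchensted

/-! ## Shapes and lattice words -/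

section Shapes

variable {ι : Type*} [DecidableEq ι] {F G : Multiset (ι × ℕ)} {b : ι} {r : ℕ} {i j : ι × ℕ}

/-- A tuple of partitions indexed by `ι`, encoded as the multiset in which the pair `(b, r)` occurs
as many times as there are boxes in row `r` of the `b`-th diagram. -/
def IsShape (F : Multiset (ι × ℕ)) : Prop :=
  ∀ b, Antitone fun r => F.count (b, r)

theorem isShape_zero : IsShape (0 : Multiset (ι × ℕ)) := fun b => by
  simpa only [Multiset.count_zero] using antitone_const

theorem IsShape.union (hF : IsShape F) (hG : IsShape G) : IsShape (F ∪ G) := fun b => by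
  simpa only [Multiset.count_union] using (hF b).max (hG b)

theorem IsShape.inter (hF : IsShape F) (hG : IsShape G) : IsShape (F ∩ G) := fun b => by
  simpa only [Multiset.count_inter] using (hF b).min (hG b)

theorem isShape_iff : IsShape F ↔ ∀ b r, F.count (b, r + 1) ≤ F.count (b, r) :=
  forall_congr' fun _ => ⟨fun h r => h r.le_succ, fun h => antitone_nat_of_succ_le h⟩

theorem IsShape.cons_zero (hF : IsShape F) (b : ι) : IsShape ((b, 0) ::ₘ F) := by
  simp only [isShape_iff, Multiset.count_cons] at hF ⊢
  grind

theorem IsShape.count_lt_of_lt {s : ℕ} (hF : IsShape ((b, r) ::ₘ F)) (hs : s < r) :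
    F.count (b, r) < F.count (b, s) := by
  have := hF b hs.le
  simpa [Multiset.count_cons, hs.ne] using this

theorem IsShape.cons_succ_iff (hF : IsShape F) :
    IsShape ((b, r + 1) ::ₘ F) ↔ F.count (b, r + 1) < F.count (b, r) := by
  simp only [isShape_iff, Multiset.count_cons] at hF ⊢
  grind

theorem IsShape.erase_iff (hF : IsShape F) (hi : (b, r) ∈ F) :
    IsShape (F.erase (b, r)) ↔ F.count (b, r + 1) < F.count (b, r) := by
  rw [← Multiset.count_pos] at hi
  simp only [isShape_iff, ← Multiset.sub_singleton, Multiset.count_sub,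
    Multiset.count_singleton] at hF ⊢
  grind

theorem inter_cons_erase (hij : i ≠ j) (F : Multiset (ι × ℕ)) :
    F ∩ (i ::ₘ F.erase j) = F.erase j := by
  ext k
  simp only [Multiset.count_inter, Multiset.count_cons, ← Multiset.sub_singleton,
    Multiset.count_sub, Multiset.count_singleton]
  grind

theorem union_cons_erase (hij : i ≠ j) (F : Multiset (ι × ℕ)) :
    F ∪ (i ::ₘ F.erase j) = i ::ₘ F := by
  ext k
  simp only [Multiset.count_union, Multiset.count_cons, ← Multiset.sub_singleton,
    Multiset.count_sub, Multiset.count_singleton]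
  grind

/-- The boxes added along a saturated chain of shapes starting from the empty one, listed with the
latest box first; thus every suffix is required to be a shape. -/
def IsLatticeWord (l : List (ι × ℕ)) : Prop :=
  ∀ s, s <:+ l → IsShape (s : Multiset (ι × ℕ))

theorem isLatticeWord_cons {l : List (ι × ℕ)} :
    IsLatticeWord (i :: l) ↔ IsShape (i ::ₘ (l : Multiset (ι × ℕ))) ∧ IsLatticeWord l := by
  simp only [IsLatticeWord, List.suffix_cons_iff, forall_eq_or_imp, Multiset.cons_coe]

theorem IsLatticeWord.isShape {l : List (ι × ℕ)} (hl : IsLatticeWord l) :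
    IsShape (l : Multiset (ι × ℕ)) :=
  hl l List.suffix_rfl

/-- The boxes, given by their component and row, that can be removed from the shape `F`. -/
noncomputable def removable (F : Multiset (ι × ℕ)) : Finset (ι × ℕ) :=
  {i ∈ F.toFinset | IsShape (F.erase i)}

theorem mem_removable : i ∈ removable F ↔ i ∈ F ∧ IsShape (F.erase i) := by
  simp only [removable, Finset.mem_filter, Multiset.mem_toFinset]

/-- Stanley's operator `D` on functions on shapes: sum over the shapes with one box less. -/
noncomputable def down (g : Multiset (ι × ℕ) → ℕ) (F : Multiset (ι × ℕ)) : ℕ :=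
  ∑ i ∈ removable F, g (F.erase i)

variable [Fintype ι]

/-- The boxes that can be added to the shape `F`: at the end of the top row of any component, or at
the end of the row below a removable box. -/
noncomputable def addable (F : Multiset (ι × ℕ)) : Finset (ι × ℕ) :=
  (removable F).image (fun i => (i.1, i.2 + 1)) ∪ Finset.univ.image (·, 0)

theorem IsShape.mem_addable (hF : IsShape F) : i ∈ addable F ↔ IsShape (i ::ₘ F) := by
  obtain ⟨b, _ | r⟩ := i
  · simp [addable, hF.cons_zero]
  · have h : (b, r) ∈ F ∧ IsShape (F.erase (b, r)) ↔ F.count (b, r + 1) < F.count (b, r) :=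
      ⟨fun h => (hF.erase_iff h.1).1 h.2, fun h =>
        have hi := Multiset.count_pos.1 (Nat.zero_lt_of_lt h)
        ⟨hi, (hF.erase_iff hi).2 h⟩⟩
    simp [addable, mem_removable, hF.cons_succ_iff, h]

theorem card_addable (F : Multiset (ι × ℕ)) :
    (addable F).card = (removable F).card + Fintype.card ι := by
  rw [addable, Finset.card_union_of_disjoint, Finset.card_image_of_injective,
    Finset.card_image_of_injective, Finset.card_univ]
  · exact Prod.mk_left_injective 0
  · exact Function.injective_id.prodMap (add_left_injective 1)
  · simp only [Finset.disjoint_left, Finset.mem_image]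
    rintro _ ⟨i, -, rfl⟩ ⟨b, -, h⟩
    exact Nat.succ_ne_zero _ (congrArg Prod.snd h).symm

/-- Moving the box `j` to the place `i` passes through a shape whether one starts by adding `i` or
by removing `j`: shapes form a lattice. -/
theorem IsShape.mem_addable_and_mem_removable_cons_iff (hF : IsShape F) (hij : i ≠ j) :
    i ∈ addable F ∧ j ∈ removable (i ::ₘ F) ↔ j ∈ removable F ∧ i ∈ addable (F.erase j) := by
  rw [hF.mem_addable, mem_removable, mem_removable, Multiset.erase_cons_tail _ hij,
    Multiset.mem_cons, or_iff_right hij.symm]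
  constructor
  · rintro ⟨-, hj, h⟩
    have hFj : IsShape (F.erase j) := inter_cons_erase hij F ▸ hF.inter h
    exact ⟨⟨hj, hFj⟩, hFj.mem_addable.2 h⟩
  · rintro ⟨⟨hj, hFj⟩, h⟩
    rw [hFj.mem_addable] at h
    exact ⟨union_cons_erase hij F ▸ hF.union h, hj, h⟩

/-- Stanley's operator `U` on functions on shapes: sum over the shapes with one more box. -/
noncomputable def up (g : Multiset (ι × ℕ) → ℕ) (F : Multiset (ι × ℕ)) : ℕ :=
  ∑ i ∈ addable F, g (i ::ₘ F)

theorem IsShape.up_down (hF : IsShape F) (g : Multiset (ι × ℕ) → ℕ) :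
    up (down g) F = down (up g) F + Fintype.card ι * g F := by
  have add_remove : ∀ i ∈ addable F, down g (i ::ₘ F) =
      g F + ∑ j ∈ (removable (i ::ₘ F)).erase i, g (i ::ₘ F.erase j) := by
    intro i _
    have hi : i ∈ removable (i ::ₘ F) :=
      mem_removable.2 ⟨Multiset.mem_cons_self i F, by rwa [Multiset.erase_cons_head]⟩
    rw [down, ← Finset.add_sum_erase _ _ hi, Multiset.erase_cons_head]
    congr 1
    refine Finset.sum_congr rfl fun j hj => ?_
    rw [Multiset.erase_cons_tail _ (Finset.ne_of_mem_erase hj).symm]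
  have remove_add : ∀ j ∈ removable F, up g (F.erase j) =
      g F + ∑ i ∈ (addable (F.erase j)).erase j, g (i ::ₘ F.erase j) := by
    intro j hj
    obtain ⟨hjF, hFj⟩ := mem_removable.1 hj
    have hj : j ∈ addable (F.erase j) := hFj.mem_addable.2 (by rwa [Multiset.cons_erase hjF])
    rw [up, ← Finset.add_sum_erase _ _ hj, Multiset.cons_erase hjF]
  have move : ∑ i ∈ addable F, ∑ j ∈ (removable (i ::ₘ F)).erase i, g (i ::ₘ F.erase j) =
      ∑ j ∈ removable F, ∑ i ∈ (addable (F.erase j)).erase j, g (i ::ₘ F.erase j) := by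
    refine Finset.sum_comm' fun i j => ?_
    simp only [Finset.mem_erase]
    have := hF.mem_addable_and_mem_removable_cons_iff (i := i) (j := j)
    tauto
  rw [up, down, Finset.sum_congr rfl add_remove, Finset.sum_congr rfl remove_add,
    Finset.sum_add_distrib, Finset.sum_add_distrib, move, Finset.sum_const, Finset.sum_const,
    card_addable, smul_eq_mul, smul_eq_mul]
  ring

theorem IsShape.up_congr (hF : IsShape F) {g h : Multiset (ι × ℕ) → ℕ}
    (H : ∀ G, IsShape G → g G = h G) : up g F = up h F :=
  Finset.sum_congr rfl fun _ hi => H _ (hF.mem_addable.1 hi)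

theorem IsShape.up_iterate_succ_one (k : ℕ) (hF : IsShape F) :
    up^[k + 1] 1 F = Fintype.card ι * up^[k] 1 F + down (up^[k] 1) F +
      Fintype.card ι * k * up^[k - 1] 1 F := by
  induction k generalizing F with
  | zero =>
    simp only [Function.iterate_succ, Function.iterate_zero, Function.comp_apply, id, up, down,
      Pi.one_apply, Finset.sum_const, card_addable]
    ring
  | succ k ih =>
    have up_previous : k * up (up^[k - 1] 1) F = k * up^[k] 1 F := by
      obtain _ | k := k
      · simp only [zero_mul]
      · rw [Nat.add_sub_cancel, Function.iterate_succ_apply']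
    calc up^[k + 2] 1 F
      _ = up (up^[k + 1] 1) F := by rw [Function.iterate_succ_apply']
      _ = up (fun G => Fintype.card ι * up^[k] 1 G + down (up^[k] 1) G +
            Fintype.card ι * k * up^[k - 1] 1 G) F := hF.up_congr fun G hG => ih hG
      _ = Fintype.card ι * up (up^[k] 1) F + up (down (up^[k] 1)) F +
            Fintype.card ι * (k * up (up^[k - 1] 1) F) := by
          simp only [up, Finset.sum_add_distrib, Finset.mul_sum, mul_assoc]
      _ = _ := by
          rw [hF.up_down, up_previous, ← Function.iterate_succ_apply' up k, Nat.add_sub_cancel]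
          ring

/-- The number of lattice words of length `n` in `r` components, defined by the recurrence that the
differential poset of `r`-tuples of partitions entails. -/
def chainCount (r : ℕ) : ℕ → ℕ
  | 0 => 1
  | 1 => r
  | n + 2 => r * chainCount r (n + 1) + r * (n + 1) * chainCount r n

theorem chainCount_succ (r n : ℕ) :
    chainCount r (n + 1) = r * chainCount r n + r * n * chainCount r (n - 1) := by
  cases n <;> simp [chainCount]

theorem up_iterate_one_zero (n : ℕ) :
    up^[n] 1 (0 : Multiset (ι × ℕ)) = chainCount (Fintype.card ι) n := by
  induction n using Nat.strong_induction_on with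
  | _ n ih =>
    obtain _ | n := n
    · rfl
    · have down_zero : down (up^[n] 1) (0 : Multiset (ι × ℕ)) = 0 := by simp [down, removable]
      rw [isShape_zero.up_iterate_succ_one, down_zero, ih n n.lt_succ_self,
        ih (n - 1) (by lia), chainCount_succ, add_zero]

/-- The set of lattice words of length `n`, as a finite set. -/
noncomputable def latticeWords : ℕ → Finset (List (ι × ℕ))
  | 0 => {[]}
  | n + 1 => (latticeWords n).biUnion fun l => (addable (l : Multiset (ι × ℕ))).image (· :: l)

theorem mem_latticeWords {n : ℕ} {l : List (ι × ℕ)} :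
    l ∈ latticeWords n ↔ l.length = n ∧ IsLatticeWord l := by
  induction n generalizing l with
  | zero =>
    simp only [latticeWords, Finset.mem_singleton, List.length_eq_zero_iff]
    refine ⟨?_, And.left⟩
    rintro rfl
    refine ⟨rfl, fun s hs => ?_⟩
    rw [List.suffix_nil.1 hs]
    exact isShape_zero
  | succ n ih =>
    simp only [latticeWords, Finset.mem_biUnion, Finset.mem_image, ih]
    constructor
    · rintro ⟨l, ⟨rfl, hl⟩, i, hi, rfl⟩
      exact ⟨rfl, isLatticeWord_cons.2 ⟨hl.isShape.mem_addable.1 hi, hl⟩⟩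
    · obtain _ | ⟨i, l⟩ := l
      · rintro ⟨⟨⟩, -⟩
      · rintro ⟨hlen, hl⟩
        obtain ⟨hil, hl⟩ := isLatticeWord_cons.1 hl
        exact ⟨l, ⟨Nat.succ_injective hlen, hl⟩, i, hl.isShape.mem_addable.2 hil, rfl⟩

theorem sum_latticeWords_succ (n : ℕ) (g : Multiset (ι × ℕ) → ℕ) :
    ∑ l ∈ (latticeWords (n + 1) : Finset (List (ι × ℕ))), g l =
      ∑ l ∈ (latticeWords n : Finset (List (ι × ℕ))), up g l := by
  rw [latticeWords, Finset.sum_biUnion]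
  · refine Finset.sum_congr rfl fun l _ => ?_
    rw [Finset.sum_image fun i _ j _ h => (List.cons.inj h).1]
    rfl
  · intro l _ l' _ hne
    simp only [Function.onFun, Finset.disjoint_left, Finset.mem_image]
    rintro _ ⟨i, -, rfl⟩ ⟨j, -, h⟩
    exact hne (List.cons.inj h).2.symm

theorem sum_latticeWords (n : ℕ) (g : Multiset (ι × ℕ) → ℕ) :
    ∑ l ∈ (latticeWords n : Finset (List (ι × ℕ))), g l = up^[n] g 0 := by
  induction n generalizing g with
  | zero => rw [latticeWords, Finset.sum_singleton, Multiset.coe_nil, Function.iterate_zero, id]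
  | succ n ih => rw [sum_latticeWords_succ, ih, Function.iterate_succ_apply]

variable (ι) in
theorem card_latticeWords (n : ℕ) :
    (latticeWords n : Finset (List (ι × ℕ))).card = chainCount (Fintype.card ι) n := by
  rw [← up_iterate_one_zero, ← sum_latticeWords, Finset.card_eq_sum_ones]
  rfl

end Shapes

/-! ## Signed involutions -/

section OddInvolutions

open Equiv

variable {S : Finset ℕ} {s e : ℤ} {u w : Perm ℤ}

/-- The involutions of `ℤ` that commute with negation and move no integer whose absolute value is
outside `S`. -/
def oddInvolutions (S : Finset ℕ) : Set (Perm ℤ) :=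
  {w | Function.Odd w ∧ (∀ i : ℤ, i.natAbs ∉ S → w i = i) ∧ w * w = 1}

theorem oddInvolutions_empty : oddInvolutions ∅ = {1} := by
  ext w
  refine ⟨fun h => Equiv.ext fun i => h.2.1 i (Finset.notMem_empty _), ?_⟩
  rintro rfl
  exact ⟨fun _ => rfl, fun _ _ => rfl, rfl⟩

theorem natAbs_apply_mem (hw : w ∈ oddInvolutions S) (hs : s.natAbs ∈ S) : (w s).natAbs ∈ S := by
  by_contra h
  rw [← w.injective (hw.2.1 _ h)] at hs
  exact h hs

/-- The odd involution that exchanges `s` and `e` and moves only `±s` and `±e`, for nonzero `s` and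
`e`. -/
def oddSwap (s e : ℤ) : Perm ℤ :=
  if e = -s then swap s e else swap s e * swap (-s) (-e)

theorem oddSwap_apply_left (hs : s ≠ 0) : oddSwap s e s = e := by
  have : s ≠ -s := by lia
  by_cases h : e = -s
  · rw [oddSwap, if_pos h, swap_apply_left]
  · rw [oddSwap, if_neg h, Perm.mul_apply,
      swap_apply_of_ne_of_ne this (fun h' => h (by lia)), swap_apply_left]

theorem oddSwap_apply_of_natAbs_ne {i : ℤ} (his : i.natAbs ≠ s.natAbs)
    (hie : i.natAbs ≠ e.natAbs) : oddSwap s e i = i := by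
  simp only [oddSwap, DFunLike.ite_apply, Perm.mul_apply, swap_apply_def]
  grind

theorem odd_oddSwap (hs : s ≠ 0) (he : e ≠ 0) : Function.Odd (oddSwap s e) := fun i => by
  simp only [oddSwap, DFunLike.ite_apply, Perm.mul_apply, swap_apply_def]
  grind

theorem oddSwap_mul_self (hs : s ≠ 0) (he : e ≠ 0) : oddSwap s e * oddSwap s e = 1 := by
  ext i
  simp only [oddSwap, DFunLike.ite_apply, Perm.mul_apply, swap_apply_def, Perm.one_apply]
  grind

theorem eq_oddSwap_of_mem (hw : w ∈ oddInvolutions S) (hs : s ≠ 0) (he : e ≠ 0) (hse : w s = e)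
    {i : ℤ} (hi : i.natAbs = s.natAbs ∨ i.natAbs = e.natAbs) : w i = oddSwap s e i := by
  have hes : w e = s := by rw [← hse]; exact Equiv.congr_fun hw.2.2 s
  have hτ := oddSwap_apply_left (e := e) hs
  have hτ' : oddSwap s e e = s := by
    have := Equiv.congr_fun (oddSwap_mul_self hs he) s
    rwa [Perm.mul_apply, hτ] at this
  simp only [Int.natAbs_eq_natAbs_iff] at hi
  obtain (rfl | rfl) | (rfl | rfl) := hi
  · rw [hse, hτ]
  · rw [hw.1, odd_oddSwap hs he, hse, hτ]
  · rw [hes, hτ']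
  · rw [hw.1, odd_oddSwap hs he, hes, hτ']

theorem oddSwap_mem (hs : s ≠ 0) (he : e ≠ 0) :
    oddSwap s e ∈ oddInvolutions {s.natAbs, e.natAbs} := by
  refine ⟨odd_oddSwap hs he, fun i hi => ?_, oddSwap_mul_self hs he⟩
  simp only [Finset.mem_insert, Finset.mem_singleton, not_or] at hi
  exact oddSwap_apply_of_natAbs_ne hi.1 hi.2

theorem mul_mem_oddInvolutions {T U : Finset ℕ} (hTU : Disjoint T U)
    (hu : u ∈ oddInvolutions T) (hw : w ∈ oddInvolutions U) :
    u * w ∈ oddInvolutions (T ∪ U) := by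
  have hdisj : Perm.Disjoint u w := fun i =>
    (em (i.natAbs ∈ T)).symm.imp (hu.2.1 i) fun h => hw.2.1 i (Finset.disjoint_left.1 hTU h)
  refine ⟨hu.1.comp_odd hw.1, fun i hi => ?_, ?_⟩
  · rw [Finset.notMem_union] at hi
    rw [Perm.mul_apply, hw.2.1 i hi.2, hu.2.1 i hi.1]
  · rw [hdisj.commute.symm.mul_mul_mul_comm, hu.2.2, hw.2.2, one_mul]

theorem oddSwap_mul_mem (hw : w ∈ oddInvolutions S) (hs : s ≠ 0) (he : e ≠ 0) (hse : w s = e) :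
    oddSwap s e * w ∈ oddInvolutions (S \ {s.natAbs, e.natAbs}) := by
  have hττ := oddSwap_mul_self hs he
  have hfix : ∀ i : ℤ, i.natAbs = s.natAbs ∨ i.natAbs = e.natAbs → (oddSwap s e * w) i = i :=
    fun i hi => by
      rw [Perm.mul_apply, eq_oddSwap_of_mem hw hs he hse hi]
      exact Equiv.congr_fun hττ i
  have hdisj : Perm.Disjoint (oddSwap s e) (oddSwap s e * w) := fun i => by
    by_cases hi : i.natAbs = s.natAbs ∨ i.natAbs = e.natAbs
    · exact Or.inr (hfix i hi)
    · rw [not_or] at hi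
      exact Or.inl (oddSwap_apply_of_natAbs_ne hi.1 hi.2)
  refine ⟨(odd_oddSwap hs he).comp_odd hw.1, fun i hi => ?_, ?_⟩
  · by_cases hise : i.natAbs = s.natAbs ∨ i.natAbs = e.natAbs
    · exact hfix i hise
    · rw [Perm.mul_apply, hw.2.1 i (by grind)]
      rw [not_or] at hise
      exact oddSwap_apply_of_natAbs_ne hise.1 hise.2
  · have hτu : oddSwap s e * (oddSwap s e * w) = w := by rw [← mul_assoc, hττ, one_mul]
    calc oddSwap s e * w * (oddSwap s e * w)
      _ = oddSwap s e * oddSwap s e * (oddSwap s e * w * (oddSwap s e * w)) := by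
          rw [hττ, one_mul]
      _ = w * w := by rw [hdisj.commute.mul_mul_mul_comm, hτu]
      _ = 1 := hw.2.2

theorem setOf_apply_eq (hs : s ≠ 0) (he : e ≠ 0) (hsS : s.natAbs ∈ S) (heS : e.natAbs ∈ S) :
    {w ∈ oddInvolutions S | w s = e} =
      (oddSwap s e * ·) ⁻¹' oddInvolutions (S \ {s.natAbs, e.natAbs}) := by
  ext w
  refine ⟨fun h => oddSwap_mul_mem h.1 hs he h.2, fun hu => ?_⟩
  have hw : oddSwap s e * (oddSwap s e * w) = w := by
    rw [← mul_assoc, oddSwap_mul_self hs he, one_mul]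
  have hsub : {s.natAbs, e.natAbs} ⊆ S := by grind
  refine ⟨?_, ?_⟩
  · have := mul_mem_oddInvolutions Finset.disjoint_sdiff (oddSwap_mem hs he) hu
    rwa [Finset.union_sdiff_of_subset hsub, hw] at this
  · rw [← hw, Perm.mul_apply, hu.2.1 s (by simp), oddSwap_apply_left hs]

theorem encard_setOf_natAbs_apply_eq {s t : ℕ} (hS : 0 ∉ S) (hs : s ∈ S) (ht : t ∈ S) :
    {w ∈ oddInvolutions S | (w s).natAbs = t}.encard =
      2 * (oddInvolutions (S \ {s, t})).encard := by
  have hs0 : (s : ℤ) ≠ 0 := by grind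
  have ht0 : (t : ℤ) ≠ 0 := by grind
  have hsplit : {w ∈ oddInvolutions S | (w s).natAbs = t} =
      {w ∈ oddInvolutions S | w s = t} ∪ {w ∈ oddInvolutions S | w s = -t} := by
    ext w
    simp only [Set.mem_union, Set.mem_ofPred_eq, Int.natAbs_eq_iff, and_or_left]
  have hdisj : Disjoint {w ∈ oddInvolutions S | w s = t} {w ∈ oddInvolutions S | w s = -t} :=
    Set.disjoint_left.2 fun w h h' => ht0 (by have := h.2.symm.trans h'.2; lia)
  rw [hsplit, Set.encard_union_eq hdisj, setOf_apply_eq hs0 ht0 hs ht,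
    setOf_apply_eq hs0 (neg_ne_zero.2 ht0) hs (by simpa using ht),
    Set.encard_preimage_of_bijective (Group.mulLeft_bijective _),
    Set.encard_preimage_of_bijective (Group.mulLeft_bijective _), Int.natAbs_neg,
    Int.natAbs_natCast, Int.natAbs_natCast, two_mul]

theorem encard_oddInvolutions_eq_sum {s : ℕ} (hS : 0 ∉ S) (hs : s ∈ S) :
    (oddInvolutions S).encard = ∑ t ∈ S, 2 * (oddInvolutions (S \ {s, t})).encard := by
  have hunion : oddInvolutions S =
      ⋃ t ∈ (S : Set ℕ), {w ∈ oddInvolutions S | (w s).natAbs = t} := by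
    ext w
    simp only [Set.mem_iUnion, Set.mem_ofPred_eq, Finset.mem_coe, exists_prop]
    exact ⟨fun hw => ⟨_, natAbs_apply_mem hw (s := s) hs, hw, rfl⟩, fun ⟨_, _, hw, _⟩ => hw⟩
  have hdisj : (S : Set ℕ).PairwiseDisjoint
      fun t => {w ∈ oddInvolutions S | (w s).natAbs = t} := fun t _ t' _ hne =>
    Set.disjoint_left.2 fun w h h' => hne (h.2.symm.trans h'.2)
  rw [hunion, S.finite_toSet.encard_biUnion hdisj, finsum_mem_coe_finset]
  exact Finset.sum_congr rfl fun t ht => encard_setOf_natAbs_apply_eq hS hs ht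

theorem encard_oddInvolutions (hS : 0 ∉ S) : (oddInvolutions S).encard = chainCount 2 S.card := by
  induction hn : S.card using Nat.strong_induction_on generalizing S with
  | _ n ih =>
    obtain rfl | ⟨s, hs⟩ := S.eq_empty_or_nonempty
    · rw [oddInvolutions_empty, Set.encard_singleton, ← hn]
      rfl
    obtain ⟨k, rfl⟩ : ∃ k, n = k + 1 := ⟨n - 1, by have := Finset.card_pos.2 ⟨s, hs⟩; lia⟩
    have hk : (S.erase s).card = k := by rw [Finset.card_erase_of_mem hs, hn, Nat.add_sub_cancel]
    have hss : (oddInvolutions (S \ {s, s})).encard = chainCount 2 k :=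
      ih k k.lt_succ_self (by grind) (by rw [← hk]; congr 1; grind)
    have hst : ∀ t ∈ S.erase s, (oddInvolutions (S \ {s, t})).encard = chainCount 2 (k - 1) :=
      fun t ht => ih (k - 1) (by lia) (by grind) (by
        rw [← hk, ← Finset.card_erase_of_mem ht]; congr 1; grind)
    rw [encard_oddInvolutions_eq_sum hS hs, ← Finset.add_sum_erase _ _ hs, hss,
      Finset.sum_congr rfl fun t ht => by rw [hst t ht], Finset.sum_const, hk, chainCount_succ,
      nsmul_eq_mul]
    push_cast
    ring

theorem ncard_involutions (n : ℕ) : {w ∈ Wset n | w * w = 1}.ncard = chainCount 2 n := by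
  have hWset : {w ∈ Wset n | w * w = 1} = oddInvolutions (Finset.Icc 1 n) := by
    ext w
    simp only [Wset, oddInvolutions, Set.mem_ofPred_eq, and_assoc]
    refine and_congr_right fun hodd => and_congr_left fun _ => forall_congr' fun i => ?_
    obtain rfl | hi := eq_or_ne i 0
    · simp [Function.Odd.map_zero hodd]
    · have : (n : ℤ) < |i| ↔ i.natAbs ∉ Finset.Icc 1 n := by grind
      rw [this]
  rw [hWset, Set.ncard, encard_oddInvolutions (by simp), Nat.card_Icc, Nat.add_sub_cancel,
    ENat.toNat_natCast]

end OddInvolutions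

/-! ## Row insertion -/

section Insertion

variable {a b c j r x y : ℕ} {row s t : List ℕ} {T rest : Tab}

/-- `ColStrict s t` says that the row `t` can be put below the row `s` in a tableau: it is at most
as long as `s`, and the entries increase strictly from `s` to `t` in each column. -/
inductive ColStrict : List ℕ → List ℕ → Prop
  | nil (s : List ℕ) : ColStrict s []
  | cons {a c : ℕ} {s t : List ℕ} (hac : a < c) (hst : ColStrict s t) : ColStrict (a :: s) (c :: t)

/-- Semistandardness of a tableau: the rows increase weakly and the columns strictly. -/
def IsSemistandard : Tab → Prop
  | [] => True
  | row :: rest => row.Pairwise (· ≤ ·) ∧ ColStrict row (rest.headD []) ∧ IsSemistandard rest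

theorem ColStrict.length_le (h : ColStrict s t) : t.length ≤ s.length := by
  induction h with
  | nil => exact Nat.zero_le _
  | cons _ _ ih => exact Nat.succ_le_succ ih

theorem ColStrict.exists_getElem?_lt (h : ColStrict s t) (hy : t[j]? = some y) :
    ∃ z < y, s[j]? = some z := by
  induction h generalizing j with
  | nil => simp at hy
  | cons hac _ ih =>
    obtain _ | j := j
    · obtain rfl : _ = y := Option.some.inj hy
      exact ⟨_, hac, rfl⟩
    · exact ih hy

theorem insRow_cons_of_lt (h : x < y) (ys : List ℕ) : insRow x (y :: ys) = (x :: ys, some y) := by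
  rw [insRow, if_pos h]

theorem insRow_cons_of_le (h : y ≤ x) (ys : List ℕ) :
    insRow x (y :: ys) = (y :: (insRow x ys).1, (insRow x ys).2) := by
  rw [insRow, if_neg h.not_gt]

theorem mem_insRow (h : y ∈ (insRow x row).1) : y = x ∨ y ∈ row := by
  fun_induction insRow x row <;> grind

theorem lt_of_insRow_eq_some (h : (insRow x row).2 = some b) : x < b := by
  fun_induction insRow x row <;> grind

theorem length_insRow (x : ℕ) (row : List ℕ) :
    (insRow x row).1.length = row.length + if (insRow x row).2 = none then 1 else 0 := by
  fun_induction insRow x row <;> grind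

theorem pairwise_insRow (h : row.Pairwise (· ≤ ·)) : (insRow x row).1.Pairwise (· ≤ ·) := by
  induction row with
  | nil => exact List.pairwise_singleton _ _
  | cons a row ih =>
    rw [List.pairwise_cons] at h
    obtain hx | hx := lt_or_ge x a
    · rw [insRow_cons_of_lt hx]
      exact h.2.cons fun y hy => hx.le.trans (h.1 y hy)
    · rw [insRow_cons_of_le hx]
      refine (ih h.2).cons fun y hy => ?_
      obtain rfl | hy := mem_insRow hy
      exacts [hx, h.1 y hy]

theorem ColStrict.insRow_left (h : ColStrict s t) : ColStrict (insRow x s).1 t := by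
  induction h with
  | nil => exact .nil _
  | @cons a c s t hac hst ih =>
    obtain hx | hx := lt_or_ge x a
    · rw [insRow_cons_of_lt hx]
      exact .cons (hx.trans hac) hst
    · rw [insRow_cons_of_le hx]
      exact .cons hac ih

/-- The bumped entry `b` stops in the row below weakly to the left of the place it came from. -/
theorem ColStrict.insRow_insRow (h : ColStrict s t) (hb : (insRow x s).2 = some b) :
    ColStrict (insRow x s).1 (insRow b t).1 := by
  have hxb := lt_of_insRow_eq_some hb
  induction s generalizing t with
  | nil => cases hb
  | cons a s ih =>
    obtain hx | hx := lt_or_ge x a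
    · rw [insRow_cons_of_lt hx] at hb ⊢
      obtain rfl : a = b := Option.some.inj hb
      cases h with
      | nil => exact .cons hx (.nil _)
      | cons hac hst => exact insRow_cons_of_lt hac _ ▸ .cons hx hst
    · rw [insRow_cons_of_le hx] at hb ⊢
      cases h with
      | nil => exact .cons (hx.trans_lt hxb) (.nil _)
      | @cons _ c _ t hac hst =>
        obtain hbc | hbc := lt_or_ge b c
        · rw [insRow_cons_of_lt hbc]
          exact .cons (hx.trans_lt hxb) hst.insRow_left
        · rw [insRow_cons_of_le hbc]
          exact .cons hac (ih hst hb)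

theorem insTab_cons_of_eq_none (h : (insRow x row).2 = none) (rest : Tab) :
    insTab x (row :: rest) = ((insRow x row).1 :: rest, 0, row.length) := by
  simp only [insTab, h]

theorem insTab_cons_of_eq_some (h : (insRow x row).2 = some b) (rest : Tab) :
    insTab x (row :: rest) =
      ((insRow x row).1 :: (insTab b rest).1, (insTab b rest).2.1 + 1, (insTab b rest).2.2) := by
  simp only [insTab, h]

theorem headD_insTab (x : ℕ) (T : Tab) :
    (insTab x T).1.headD [] = (insRow x (T.headD [])).1 := by
  obtain _ | ⟨row, rest⟩ := T
  · rfl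
  · cases h : (insRow x row).2 with
    | none => rw [insTab_cons_of_eq_none h]; rfl
    | some b => rw [insTab_cons_of_eq_some h]; rfl

theorem isSemistandard_insTab (hT : IsSemistandard T) : IsSemistandard (insTab x T).1 := by
  induction T generalizing x with
  | nil => exact ⟨List.pairwise_singleton _ _, .nil _, trivial⟩
  | cons row rest ih =>
    cases h : (insRow x row).2 with
    | none =>
      rw [insTab_cons_of_eq_none h]
      exact ⟨pairwise_insRow hT.1, hT.2.1.insRow_left, hT.2.2⟩
    | some b =>
      rw [insTab_cons_of_eq_some h]
      exact ⟨pairwise_insRow hT.1, headD_insTab b rest ▸ hT.2.1.insRow_insRow h, ih hT.2.2⟩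

theorem length_getD_insTab (x : ℕ) (T : Tab) (r : ℕ) :
    ((insTab x T).1.getD r []).length =
      (T.getD r []).length + if r = (insTab x T).2.1 then 1 else 0 := by
  induction T generalizing x r with
  | nil => cases r <;> simp [insTab]
  | cons row rest ih =>
    cases h : (insRow x row).2 with
    | none =>
      rw [insTab_cons_of_eq_none h]
      cases r <;> simp [length_insRow, h]
    | some b =>
      rw [insTab_cons_of_eq_some h]
      obtain _ | r := r
      · simp [length_insRow, h]
      · simpa using ih b r

theorem IsSemistandard.length_getD_succ_le (hT : IsSemistandard T) (r : ℕ) :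
    (T.getD (r + 1) []).length ≤ (T.getD r []).length := by
  induction T generalizing r with
  | nil => exact le_rfl
  | cons row rest ih =>
    obtain _ | r := r
    · have := hT.2.1.length_le
      obtain _ | ⟨t, rest⟩ := rest
      exacts [Nat.zero_le _, this]
    · exact ih hT.2.2 r

/-- The entry `y` occurs in column `j` of the tableau `T`. -/
def InColumn (T : Tab) (j y : ℕ) : Prop :=
  ∃ row ∈ T, row[j]? = some y

theorem inColumn_cons : InColumn (row :: rest) j y ↔ row[j]? = some y ∨ InColumn rest j y := by
  simp only [InColumn, List.mem_cons, exists_eq_or_imp]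

theorem IsSemistandard.exists_getElem?_lt (hT : IsSemistandard (row :: rest))
    (hy : InColumn rest j y) : ∃ z < y, row[j]? = some z := by
  induction rest generalizing row y with
  | nil => simp [InColumn] at hy
  | cons t rest ih =>
    obtain ⟨-, hst, ht⟩ := hT
    obtain hy | hy := inColumn_cons.1 hy
    · exact hst.exists_getElem?_lt hy
    · obtain ⟨z, hzy, hz⟩ := ih ht hy
      obtain ⟨w, hwz, hw⟩ := hst.exists_getElem?_lt hz
      exact ⟨w, hwz.trans hzy, hw⟩

/-- The value `x` separates the entries of `T` in the columns before `c` from the other ones. -/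
def Fits (x c : ℕ) (T : Tab) : Prop :=
  ∀ j y, InColumn T j y → (j < c → y < x) ∧ (c ≤ j → x < y)

theorem insRow_eq_append (h : ∀ y ∈ row, y ≤ x) : insRow x row = (row ++ [x], none) := by
  induction row with
  | nil => rfl
  | cons a row ih =>
    rw [List.forall_mem_cons] at h
    rw [insRow_cons_of_le h.1, ih h.2, List.cons_append]

theorem insRow_eq_set (h : ∀ j < c, ∀ y, row[j]? = some y → y ≤ x) (hb : row[c]? = some b)
    (hxb : x < b) : insRow x row = (row.set c x, some b) := by
  induction row generalizing c with
  | nil => simp at hb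
  | cons a row ih =>
    obtain _ | c := c
    · obtain rfl : a = b := Option.some.inj hb
      rw [insRow_cons_of_lt hxb, List.set_cons_zero]
    · rw [insRow_cons_of_le (h 0 c.succ_pos a rfl),
        ih (fun j hj y hy => h (j + 1) (Nat.succ_lt_succ hj) y hy) hb, List.set_cons_succ]

theorem insRow_eq_append_of_fits (h : Fits x row.length (row :: rest)) :
    insRow x row = (row ++ [x], none) :=
  insRow_eq_append fun y hy => by
    obtain ⟨j, hj, rfl⟩ := List.mem_iff_getElem.1 hy
    exact ((h j _ (inColumn_cons.2 (.inl (List.getElem?_eq_getElem hj)))).1 hj).le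

theorem insRow_eq_set_of_fits (h : Fits x c (row :: rest)) (hb : row[c]? = some b) :
    insRow x row = (row.set c x, some b) :=
  insRow_eq_set
    (fun _ hj _ hy => ((h _ _ (inColumn_cons.2 (.inl hy))).1 hj).le) hb
    ((h _ _ (inColumn_cons.2 (.inl hb))).2 le_rfl)

theorem Fits.of_cons (h : Fits x c (row :: rest)) (hT : IsSemistandard (row :: rest))
    (hb : row[c]? = some b) : Fits b c rest := by
  intro j y hy
  constructor
  · intro hj
    exact ((h j y (inColumn_cons.2 (.inr hy))).1 hj).trans
      ((h c b (inColumn_cons.2 (.inl hb))).2 le_rfl)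
  · intro hj
    obtain ⟨z, hzy, hz⟩ := hT.exists_getElem?_lt hy
    refine lt_of_le_of_lt ?_ hzy
    obtain ⟨hc, rfl⟩ := List.getElem?_eq_some_iff.1 hb
    obtain ⟨hj', rfl⟩ := List.getElem?_eq_some_iff.1 hz
    exact hT.1.sortedLE.getElem_le_getElem_of_le hj

/-- Inserting a value that fits into a column pushes this column down by one box and changes nothing
else. -/
theorem insTab_of_fits (h : Fits x (T.getD r []).length T) (hT : IsSemistandard T)
    (hr : ∀ r' < r, (T.getD r []).length < (T.getD r' []).length) :
    (insTab x T).2.1 = r ∧ ∀ j y, InColumn (insTab x T).1 j y →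
      j = (T.getD r []).length ∧ y = x ∨ InColumn T j y := by
  induction T generalizing x r with
  | nil =>
    obtain rfl : r = 0 := Nat.eq_zero_of_not_pos fun h0 => absurd (hr 0 h0) (lt_irrefl 0)
    simp [insTab, InColumn, List.getElem?_singleton, eq_comm]
  | cons row rest ih =>
    obtain _ | r := r
    · have hrow : insRow x row = _ := insRow_eq_append_of_fits h
      rw [insTab_cons_of_eq_none (by rw [hrow]), hrow]
      refine ⟨rfl, fun j y hy => ?_⟩
      simp only [inColumn_cons, List.getD_cons_zero] at hy ⊢
      grind
    · simp only [List.getD_cons_succ] at h hr ⊢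
      set c := (rest.getD r []).length
      obtain ⟨b, hb⟩ : ∃ b, row[c]? = some b := ⟨_, List.getElem?_eq_getElem (hr 0 r.succ_pos)⟩
      have hrow := insRow_eq_set_of_fits h hb
      obtain ⟨ih₁, ih₂⟩ := ih (h.of_cons hT hb) hT.2.2
        fun r' hr' => hr (r' + 1) (Nat.succ_lt_succ hr')
      rw [insTab_cons_of_eq_some (by rw [hrow]), hrow]
      refine ⟨congrArg _ ih₁, fun j y hy => ?_⟩
      simp only [inColumn_cons] at hy ⊢
      grind

end Insertion

/-! ## The word of created boxes -/

section BoxWord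

variable {b : Bool} {k r x : ℕ} {T : Tab} {π : P} {l : List (Bool × ℕ)}

/-- The positive (`b = true`) or negative (`b = false`) component of a bitableau. -/
def component (b : Bool) (X : Tab × Tab) : Tab := if b then X.1 else X.2

/-- The bitableau `X` with its component of sign `b` replaced by `T`. -/
def setComponent (b : Bool) (X : Tab × Tab) (T : Tab) : Tab × Tab :=
  if b then (T, X.2) else (X.1, T)

theorem component_setComponent (b c : Bool) (X : Tab × Tab) (T : Tab) :
    component c (setComponent b X T) = if c = b then T else component c X := by
  cases b <;> cases c <;> simp [component, setComponent]

/-- The sign `ε_i` of `π(i)`, with `true` standing for `+`. -/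
def sgn (π : P) (i : ℕ) : Bool := decide (0 < π (i : ℤ))

/-- The result of inserting `|π(k + 1)|` into the component of `A_k(π)` it belongs to. -/
def insertion (k : ℕ) (π : P) : Tab × ℕ × ℕ :=
  insTab (π ((k + 1 : ℕ) : ℤ)).natAbs (component (sgn π (k + 1)) (Atab k π))

theorem RSfull_succ (k : ℕ) (π : P) : RSfull (k + 1) π = RSstep π (RSfull k π) (k + 1) := by
  simp only [RSfull, List.range_succ, List.map_append, List.foldl_append, List.map_cons,
    List.map_nil, List.foldl_cons, List.foldl_nil]

theorem Atab_succ (k : ℕ) (π : P) :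
    Atab (k + 1) π = setComponent (sgn π (k + 1)) (Atab k π) (insertion k π).1 := by
  by_cases h : 0 < π ((k + 1 : ℕ) : ℤ) <;>
    simp only [Atab, RSfull_succ, RSstep, insertion, setComponent, component, sgn, h, if_true,
      if_false, decide_true, decide_false, Bool.false_eq_true]

theorem Btab_succ (k : ℕ) (π : P) :
    Btab (k + 1) π = setComponent (sgn π (k + 1)) (Btab k π)
      (place (k + 1) (insertion k π).2 (component (sgn π (k + 1)) (Btab k π))) := by
  by_cases h : 0 < π ((k + 1 : ℕ) : ℤ) <;>
    simp only [Btab, Atab, RSfull_succ, RSstep, insertion, setComponent, component, sgn, h, if_true,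
      if_false, decide_true, decide_false, Bool.false_eq_true]

/-- The boxes created during the first `k` steps of the correspondence, latest first, each given by
its component and its row. -/
def boxWord (π : P) : ℕ → List (Bool × ℕ)
  | 0 => []
  | k + 1 => (sgn π (k + 1), (insertion k π).2.1) :: boxWord π k

theorem length_boxWord (π : P) (k : ℕ) : (boxWord π k).length = k := by
  induction k with
  | zero => rfl
  | succ k ih => rw [boxWord, List.length_cons, ih]

theorem isSemistandard_Atab (π : P) (k : ℕ) (b : Bool) :
    IsSemistandard (component b (Atab k π)) := by
  induction k with
  | zero => cases b <;> trivial
  | succ k ih =>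
    rw [Atab_succ, component_setComponent]
    split_ifs with h
    · exact isSemistandard_insTab (h ▸ ih)
    · exact ih

theorem count_boxWord (π : P) (k : ℕ) (b : Bool) (r : ℕ) :
    (boxWord π k : Multiset (Bool × ℕ)).count (b, r) =
      ((component b (Atab k π)).getD r []).length := by
  induction k with
  | zero => cases b <;> rfl
  | succ k ih =>
    rw [Atab_succ, component_setComponent, boxWord, ← Multiset.cons_coe, Multiset.count_cons, ih]
    by_cases h : b = sgn π (k + 1)
    · simp only [h, Prod.mk.injEq, true_and, if_true, insertion, length_getD_insTab]
    · simp only [h, Prod.mk.injEq, false_and, if_false, add_zero]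

theorem isLatticeWord_boxWord (π : P) (k : ℕ) : IsLatticeWord (boxWord π k) := by
  have hshape (k : ℕ) : IsShape (boxWord π k : Multiset (Bool × ℕ)) :=
    isShape_iff.2 fun b r => by
      simpa only [count_boxWord] using (isSemistandard_Atab π k b).length_getD_succ_le r
  induction k with
  | zero => exact fun s hs => List.suffix_nil.1 hs ▸ hshape 0
  | succ k ih => exact isLatticeWord_cons.2 ⟨hshape (k + 1), ih⟩

/-- The recording bitableau of a word of created boxes, latest first. The column given to `place`
is ignored. -/
def recording : List (Bool × ℕ) → Tab × Tab
  | [] => ([], [])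
  | i :: l => setComponent i.1 (recording l)
      (place (l.length + 1) (i.2, 0) (component i.1 (recording l)))

theorem Btab_eq_recording (k : ℕ) (π : P) : Btab k π = recording (boxWord π k) := by
  induction k with
  | zero => rfl
  | succ k ih =>
    rw [Btab_succ, boxWord, recording, ← ih, length_boxWord]
    rfl

theorem mem_getD_place (hr : r ≤ T.length) (c r' : ℕ) :
    x ∈ (place k (r, c) T).getD r' [] ↔ r' = r ∧ x = k ∨ x ∈ T.getD r' [] := by
  simp only [place, List.getD_eq_getElem?_getD]
  split_ifs with h
  · grind
  · obtain rfl : r = T.length := by lia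
    grind

theorem lt_length_of_mem_getD (h : x ∈ T.getD r []) : r < T.length := by
  by_contra hr
  rw [List.getD_eq_default _ _ (not_lt.1 hr)] at h
  exact List.not_mem_nil h

/-- Row `r` of the component `b` lists the times at which the box `(b, r)` is created. -/
theorem mem_getD_recording (hl : IsLatticeWord l) :
    k + 1 ∈ (component b (recording l)).getD r [] ↔ l.reverse[k]? = some (b, r) := by
  induction l generalizing b k r with
  | nil => cases b <;> simp [recording, component]
  | cons i l ih =>
    obtain ⟨c, s⟩ := i
    obtain ⟨hcons, hl⟩ := isLatticeWord_cons.1 hl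
    have hs : s ≤ (component c (recording l)).length := by
      refine le_of_forall_lt fun r hr => ?_
      have hmem : (c, r) ∈ l := Multiset.count_pos.1 (Nat.zero_lt_of_lt (hcons.count_lt_of_lt hr))
      obtain ⟨k, hk⟩ := List.mem_iff_getElem?.1 (List.mem_reverse.2 hmem)
      exact lt_length_of_mem_getD ((ih hl).2 hk)
    rw [recording, component_setComponent, List.reverse_cons]
    by_cases h : b = c
    · rw [if_pos h, mem_getD_place hs, ← h, ih hl]
      grind
    · rw [if_neg h, ih hl]
      grind

theorem recording_injOn : Set.InjOn recording {l | IsLatticeWord l} := by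
  intro l hl l' hl' h
  refine List.reverse_injective (List.ext_getElem? fun k => Option.ext fun ⟨b, r⟩ => ?_)
  rw [← mem_getD_recording hl, ← mem_getD_recording hl', h]

end BoxWord

/-! ## Realizing lattice words -/

section Realization

variable {α β : Type*} [LinearOrder α] [LinearOrder β] {π : P} {l s : List (Bool × ℕ)}

theorem exists_perm_lt_of_lt (S : Finset α) (κ : α → β) :
    ∃ v : Equiv.Perm α, (∀ i ∉ S, v i = i) ∧ ∀ i ∈ S, ∀ j ∈ S, κ i < κ j → v i < v j := by
  let e : Fin S.card ≃o S := S.orderIsoOfFin rfl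
  let σ : Equiv.Perm (Fin S.card) := Tuple.sort fun a => κ (e a)
  have hσ : Monotone fun a => κ (e (σ a)) := Tuple.monotone_sort fun a => κ (e a)
  refine ⟨Equiv.Perm.extendDomain σ.symm e.toEquiv, fun i hi =>
    Equiv.Perm.extendDomain_apply_not_subtype _ _ hi, fun i hi j hj hij => ?_⟩
  rw [Equiv.Perm.extendDomain_apply_subtype _ _ hi, Equiv.Perm.extendDomain_apply_subtype _ _ hj]
  refine e.strictMono (hσ.reflect_lt ?_)
  simpa using hij

/-- The odd map on `ℤ` sending `i > 0` to `ε i * v i`. -/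
def signedMap (v : Equiv.Perm ℕ) (ε : ℕ → ℤˣ) (z : ℤ) : ℤ := z.sign * ε z.natAbs * v z.natAbs

theorem signedMap_natCast {i : ℕ} (hi : 0 < i) (v : Equiv.Perm ℕ) (ε : ℕ → ℤˣ) :
    signedMap v ε i = ε i * v i := by
  rw [signedMap, Int.sign_natCast_of_ne_zero hi.ne', one_mul, Int.natAbs_natCast]

theorem signedMap_neg (v : Equiv.Perm ℕ) (ε : ℕ → ℤˣ) (z : ℤ) :
    signedMap v ε (-z) = -signedMap v ε z := by
  simp only [signedMap, Int.sign_neg, Int.natAbs_neg, neg_mul]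

theorem signedMap_of_eq {v : Equiv.Perm ℕ} {ε : ℕ → ℤˣ} {z : ℤ} (hv : v z.natAbs = z.natAbs)
    (hε : ε z.natAbs = 1) : signedMap v ε z = z := by
  rw [signedMap, hv, hε, Units.val_one, mul_one, Int.sign_mul_natAbs]

theorem signedMap_symm_signedMap {v : Equiv.Perm ℕ} (hv : v 0 = 0) (ε : ℕ → ℤˣ) (z : ℤ) :
    signedMap v.symm (ε ∘ v.symm) (signedMap v ε z) = z := by
  obtain rfl | hz := eq_or_ne z 0
  · simp [signedMap]
  have hpos : v z.natAbs ≠ 0 := fun h =>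
    hz (Int.natAbs_eq_zero.1 (v.injective (h.trans hv.symm)))
  have hsign : (signedMap v ε z).sign = z.sign * ε z.natAbs := by
    obtain h | h := Int.units_eq_one_or (ε z.natAbs) <;>
      simp [signedMap, h, Int.sign_natCast_of_ne_zero hpos]
  have habs : (signedMap v ε z).natAbs = v z.natAbs := by
    simp [signedMap, Int.natAbs_mul, Int.natAbs_sign_of_ne_zero hz]
  rw [signedMap, hsign, habs, Function.comp_apply, Equiv.symm_apply_apply, mul_assoc z.sign,
    Int.units_coe_mul_self, mul_one, Int.sign_mul_natAbs]

/-- The odd permutation of `ℤ` sending `i > 0` to `ε i * v i`. -/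
def signedPerm (v : Equiv.Perm ℕ) (hv : v 0 = 0) (ε : ℕ → ℤˣ) : P where
  toFun := signedMap v ε
  invFun := signedMap v.symm (ε ∘ v.symm)
  left_inv := signedMap_symm_signedMap hv ε
  right_inv z := by
    have h := signedMap_symm_signedMap (v := v.symm) (v.symm_apply_eq.2 hv.symm) (ε ∘ v.symm) z
    rwa [Equiv.symm_symm, Function.comp_assoc, Equiv.symm_comp_self, Function.comp_id] at h

theorem exists_mem_Wset {n : ℕ} (v : Equiv.Perm ℕ) (hv : ∀ i ∉ Finset.Icc 1 n, v i = i)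
    (σ : ℕ → Bool) :
    ∃ π ∈ Wset n, ∀ i ∈ Finset.Icc 1 n, sgn π i = σ i ∧ (π (i : ℤ)).natAbs = v i := by
  have hv0 : v 0 = 0 := hv 0 (by simp)
  let ε (i : ℕ) : ℤˣ := if i ∈ Finset.Icc 1 n ∧ σ i = false then -1 else 1
  refine ⟨signedPerm v hv0 ε, ⟨signedMap_neg v ε, fun z hz => ?_⟩, fun i hi => ?_⟩
  · have hz' : z.natAbs ∉ Finset.Icc 1 n := by grind
    exact signedMap_of_eq (hv _ hz') (if_neg fun h => hz' h.1)
  · have hi0 : 0 < i := (Finset.mem_Icc.1 hi).1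
    have hvi : 0 < v i := Nat.pos_of_ne_zero fun h => hi0.ne' (v.injective (h.trans hv0.symm))
    have hπ : signedPerm v hv0 ε i = ε i * v i := signedMap_natCast hi0 v ε
    have hε : ε i = if σ i = false then -1 else 1 := by simp only [ε, hi, true_and]
    rw [sgn, hπ, hε]
    cases h : σ i <;> simp [hvi]

/-- The column of the box created at step `k`, where `l` lists the boxes, latest first; thus
`l.drop (l.length - k)` lists the first `k` boxes. -/
def columnAt (l : List (Bool × ℕ)) (k : ℕ) : ℕ :=
  match l.drop (l.length - k) with
  | [] => 0
  | i :: s => (s : Multiset (Bool × ℕ)).count i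

theorem columnAt_length_succ {i : Bool × ℕ} (h : i :: s <:+ l) :
    columnAt l (s.length + 1) = (s : Multiset (Bool × ℕ)).count i := by
  rw [columnAt, ← List.length_cons (a := i), ← List.suffix_iff_eq_drop.1 h]

/-- The signed permutation `π` creates boxes in the components prescribed by `l`, and its absolute
values are ordered by the prescribed column, the later ones first in each column. -/
structure IsAdapted (π : P) (l : List (Bool × ℕ)) : Prop where
  sgn_eq : ∀ i s, i :: s <:+ l → sgn π (s.length + 1) = i.1
  natAbs_lt : ∀ j ∈ Finset.Icc 1 l.length, ∀ k ∈ Finset.Icc 1 l.length,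
    columnAt l j < columnAt l k ∨ columnAt l j = columnAt l k ∧ k < j →
      (π j).natAbs < (π k).natAbs

theorem exists_isAdapted (l : List (Bool × ℕ)) : ∃ π ∈ Wset l.length, IsAdapted π l := by
  obtain ⟨v, hv, hlt⟩ := exists_perm_lt_of_lt (Finset.Icc 1 l.length)
    fun k => toLex (columnAt l k, OrderDual.toDual k)
  obtain ⟨π, hπ, h⟩ := exists_mem_Wset v hv fun k => ((l.drop (l.length - k)).headD (true, 0)).1
  refine ⟨π, hπ, fun i s hs => ?_, fun j hj k hk hjk => ?_⟩
  · have hs' : s.length + 1 ≤ l.length := hs.length_le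
    rw [(h _ (by simpa using hs')).1, ← List.length_cons (a := i), ← List.suffix_iff_eq_drop.1 hs,
      List.headD_cons]
  · rw [(h j hj).2, (h k hk).2]
    exact hlt j hj k hk (Prod.Lex.toLex_lt_toLex.2 hjk)

theorem IsAdapted.fits (hπ : IsAdapted π l) {i : Bool × ℕ} (hs : i :: s <:+ l) {T : Tab}
    (hT : ∀ j y, InColumn T j y → ∃ k ∈ Finset.Icc 1 s.length,
      y = (π k).natAbs ∧ columnAt l k = j) :
    Fits (π ((s.length + 1 : ℕ) : ℤ)).natAbs (columnAt l (s.length + 1)) T := by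
  have hlen : s.length + 1 ≤ l.length := hs.length_le
  intro j y hy
  obtain ⟨k, hk, rfl, rfl⟩ := hT j y hy
  rw [Finset.mem_Icc] at hk
  constructor
  · exact fun h => hπ.natAbs_lt _ (by grind) _ (by grind) (.inl h)
  · exact fun h => hπ.natAbs_lt _ (by grind) _ (by grind) (by grind)

theorem IsAdapted.boxWord_eq_and_columnAt_eq (hπ : IsAdapted π l) (hl : IsLatticeWord l)
    (hs : s <:+ l) :
    boxWord π s.length = s ∧ ∀ b j y, InColumn (component b (Atab s.length π)) j y →
      ∃ k ∈ Finset.Icc 1 s.length, y = (π k).natAbs ∧ columnAt l k = j := by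
  induction s with
  | nil => exact ⟨rfl, fun b j y => by cases b <;> rintro ⟨_, ⟨⟩, -⟩⟩
  | cons i s ih =>
    obtain ⟨hword, hcol⟩ := ih ((List.suffix_cons i s).trans hs)
    have hcount (r : ℕ) : ((component i.1 (Atab s.length π)).getD r []).length =
        (s : Multiset (Bool × ℕ)).count (i.1, r) := by
      rw [← count_boxWord, hword]
    have hlast : columnAt l (s.length + 1) =
        ((component i.1 (Atab s.length π)).getD i.2 []).length := by
      rw [columnAt_length_succ hs, hcount]
    have hins : insertion s.length π = insTab (π ((s.length + 1 : ℕ) : ℤ)).natAbs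
        (component i.1 (Atab s.length π)) := by
      rw [insertion, hπ.sgn_eq i s hs]
    obtain ⟨hrow, hcol'⟩ := insTab_of_fits (hlast ▸ hπ.fits hs (hcol i.1))
      (isSemistandard_Atab π s.length i.1) fun r hr => by
        rw [hcount, hcount]
        exact IsShape.count_lt_of_lt (Multiset.cons_coe i s ▸ hl _ hs) hr
    rw [← hins] at hrow hcol'
    refine ⟨by rw [List.length_cons, boxWord, hword, hrow, hπ.sgn_eq i s hs], fun b j y hy => ?_⟩
    have hmono : Finset.Icc 1 s.length ⊆ Finset.Icc 1 (s.length + 1) :=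
      Finset.Icc_subset_Icc_right s.length.le_succ
    rw [List.length_cons, Atab_succ, component_setComponent, hπ.sgn_eq i s hs] at hy
    have hold : InColumn (component b (Atab s.length π)) j y →
        ∃ k ∈ Finset.Icc 1 (s.length + 1), y = (π k).natAbs ∧ columnAt l k = j := fun hy =>
      (hcol b j y hy).imp fun k hk => ⟨hmono hk.1, hk.2⟩
    split_ifs at hy with hb
    · obtain ⟨rfl, rfl⟩ | hy := hcol' j y hy
      · exact ⟨s.length + 1, Finset.right_mem_Icc.2 s.length.succ_pos, rfl, hlast⟩
      · exact hold (hb ▸ hy)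
    · exact hold hy

theorem exists_boxWord_eq (hl : IsLatticeWord l) : ∃ π ∈ Wset l.length, boxWord π l.length = l :=
  (exists_isAdapted l).imp fun _ ⟨hW, hπ⟩ =>
    ⟨hW, (hπ.boxWord_eq_and_columnAt_eq hl List.suffix_rfl).1⟩

theorem Btab_image_Wset (n : ℕ) :
    Btab n '' Wset n = ((latticeWords n).image recording : Finset (Tab × Tab)) := by
  ext B
  simp only [Set.mem_image, Finset.coe_image, Finset.mem_coe, mem_latticeWords]
  constructor
  · rintro ⟨π, -, rfl⟩
    exact ⟨boxWord π n, ⟨length_boxWord π n, isLatticeWord_boxWord π n⟩,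
      (Btab_eq_recording n π).symm⟩
  · rintro ⟨l, ⟨rfl, hl⟩, rfl⟩
    obtain ⟨π, hπ, hword⟩ := exists_boxWord_eq hl
    exact ⟨π, hπ, by rw [Btab_eq_recording, hword]⟩

theorem ncard_Btab_image (n : ℕ) : (Btab n '' Wset n).ncard = chainCount 2 n := by
  rw [Btab_image_Wset, Set.ncard_coe_finset, Finset.card_image_of_injOn, card_latticeWords,
    Fintype.card_bool]
  exact recording_injOn.mono fun l hl => (mem_latticeWords.1 hl).2

end Realization

end RobinsonSchensted

/-- The number of generalized Robinson–Schensted cells of `W_n`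
(the number of distinct values of `π ↦ B_n(π)` on `W_n`) equals the number of
involutions (elements `w` with `w² = 1`) of `W_n`. -/
theorem card_RS_cells_eq_card_involutions (n : ℕ) (hn : 1 ≤ n) :
    (Btab n '' Wset n).ncard = {w ∈ Wset n | w * w = 1}.ncard := by
  rw [RobinsonSchensted.ncard_Btab_image, RobinsonSchensted.ncard_involutions]
end
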